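/- arXiv:1012.1277 — 5 statements merged into one kernel-verified Lean document; each statement's English description precedes it below -/
import Mathlib

section
/- There exists a constant M > 0 depending only on the dimension n such that for every x₀ ∈ ∂Ω₀, with e = x₀/|x₀|, and every 0 < r ≤ 1/6: if h₊(x₀ − r·e)/r ≥ M, then h₋(x₀ + r·e)/r ≤ 1. -/
/-!
The claim follows from the two-point inequality `h₊(x) h₋(y) ≤ C ‖x - y‖²`, a pointwise form of
the Alt–Caffarelli–Friedman estimate, proved here by a maximum principle in the doubled variables
`(x, y)`.

Fix `r` and let `f(s) = r + s - s²/8`, a strictly concave positive profile on `[0, 4]`. Let `m` be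
the maximum of `h₊(x) h₋(y) / f(‖x - y‖)²` (with positive parts) over the product of the two
closed domains. If it were attained at an interior point, put `e = (x - y)/‖x - y‖` and let `R` be
the reflection that reverses `e`. The first-order conditions determine both gradients:
`∇h₊` and `∇h₋` are multiples of `e`. Along `(x + t w, y + t R w)` the distance is the affine function
`‖x - y‖ + 2 t ⟨e, w⟩`. Summing the second derivatives of `h₊(x) h₋(y) - m f(‖x - y‖)²` over an
orthonormal basis of directions `w`, harmonicity kills the pure second derivatives, the mixed
term cancels the `f'²` term, and what remains is `-8 m f f'' > 0`, a contradiction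
(`no_interior_contact`). The point is off the diagonal because the domains are disjoint.

Hence the maximum is attained on the boundary. It is positive, so there one point lies on
`∂B₁` or `∂B₂`; then `‖x - y‖ ≥ 1/3`, so `f ≥ 1/4`, and `h₊, h₋ ≤ 1` by the weak maximum principle
(`harmonic_le_one`), which gives `m ≤ 16`. At the points `x₀ ∓ r e₀`, where `e₀ = x₀/‖x₀‖`, the
distance is `2r` and `f(2r) ≤ 3r`, so `h₊ h₋ ≤ 144 r²`, and `M = 144` works. Star-shapedness is
used only to place `x₀ - r e₀` in the closure of `Ω₀` and `x₀ + r e₀` outside `Ω₀`.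
-/


open Metric Set

noncomputable def lapl {n : ℕ} (f : EuclideanSpace ℝ (Fin n) → ℝ)
    (x : EuclideanSpace ℝ (Fin n)) : ℝ :=
  ∑ i : Fin n, fderiv ℝ (fun y => fderiv ℝ f y (EuclideanSpace.single i (1:ℝ))) x
    (EuclideanSpace.single i (1:ℝ))

def IsHarmonicOn {n : ℕ} (f : EuclideanSpace ℝ (Fin n) → ℝ)
    (U : Set (EuclideanSpace ℝ (Fin n))) : Prop :=
  ContDiffOn ℝ 2 f U ∧ ∀ x ∈ U, lapl f x = 0

open Filter Topology InnerProductSpace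

/-! ### Second derivatives along lines -/

/-- Second-order necessary condition at a local maximum, in one variable. -/
lemma second_deriv_nonpos_of_isLocalMax {φ φ' : ℝ → ℝ} {a : ℝ}
    (h1 : ∀ᶠ t in 𝓝 0, HasDerivAt φ (φ' t) t) (h2 : HasDerivAt φ' a 0)
    (hmax : IsLocalMax φ 0) : a ≤ 0 := by
  by_contra! ha
  have hd : deriv φ =ᶠ[𝓝 0] φ' := h1.mono fun t ht => ht.deriv
  have hdd : deriv (deriv φ) 0 = a := by rw [hd.deriv_eq, h2.deriv]
  have h0 : deriv φ 0 = 0 := hmax.deriv_eq_zero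
  have hmin : IsLocalMin φ 0 :=
    isLocalMin_of_deriv_deriv_pos (by rw [hdd]; exact ha) h0 h1.self_of_nhds.continuousAt
  -- A point that is both a local maximum and a local minimum has a neighbourhood where `φ` is
  -- constant, so the second derivative vanishes there.
  have hc : φ =ᶠ[𝓝 0] fun _ => φ 0 := by
    filter_upwards [hmax, hmin] with t h1 h2 using le_antisymm h1 h2
  have : deriv φ =ᶠ[𝓝 0] fun _ => (0 : ℝ) := by
    refine hc.deriv.trans ?_
    filter_upwards with t
    simp
  rw [this.deriv_eq, deriv_const] at hdd
  linarith

section Lines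

variable {n : ℕ}

lemma lapl_eq_sum_basis {f : EuclideanSpace ℝ (Fin n) → ℝ} {x : EuclideanSpace ℝ (Fin n)}
    (hf : ContDiffAt ℝ 2 f x)
    (b : OrthonormalBasis (Fin n) ℝ (EuclideanSpace ℝ (Fin n))) :
    lapl f x = ∑ i, fderiv ℝ (fderiv ℝ f) x (b i) (b i) := by
  have hd : DifferentiableAt ℝ (fderiv ℝ f) x :=
    (hf.fderiv_right (m := 1) (by norm_num)).differentiableAt (by norm_num)
  have h1 := congrFun (laplacian_eq_iteratedFDeriv_orthonormalBasis f b) x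
  have h2 := congrFun
    (laplacian_eq_iteratedFDeriv_orthonormalBasis f (EuclideanSpace.basisFun (Fin n) ℝ)) x
  rw [h1] at h2
  simp only [iteratedFDeriv_two_apply, Matrix.cons_val_zero, Matrix.cons_val_one,
    EuclideanSpace.basisFun_apply] at h2
  rw [h2, lapl]
  refine Finset.sum_congr rfl fun i _ => ?_
  rw [fderiv_clm_apply hd (differentiableAt_const _)]
  simp

lemma hasDerivAt_line (x w : EuclideanSpace ℝ (Fin n)) (t : ℝ) :
    HasDerivAt (fun t : ℝ => x + t • w) w t := by
  simpa using ((hasDerivAt_id t).smul_const w).const_add x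

lemma tendsto_line (x w : EuclideanSpace ℝ (Fin n)) :
    Tendsto (fun t : ℝ => x + t • w) (𝓝 0) (𝓝 x) := by
  have := (hasDerivAt_line x w 0).continuousAt.tendsto
  simpa using this

lemma hasDerivAt_comp_line {f : EuclideanSpace ℝ (Fin n) → ℝ} {x : EuclideanSpace ℝ (Fin n)}
    (hf : ContDiffAt ℝ 2 f x) (w : EuclideanSpace ℝ (Fin n)) :
    ∀ᶠ t in 𝓝 (0 : ℝ), HasDerivAt (fun t : ℝ => f (x + t • w)) (fderiv ℝ f (x + t • w) w) t := by
  have h : ∀ᶠ y in 𝓝 x, DifferentiableAt ℝ f y := by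
    filter_upwards [hf.eventually (by simp)] with y hy
    exact hy.differentiableAt (by norm_num)
  filter_upwards [(tendsto_line x w).eventually h] with t ht
  exact ht.hasFDerivAt.comp_hasDerivAt t (hasDerivAt_line x w t)

lemma hasDerivAt_fderiv_line {f : EuclideanSpace ℝ (Fin n) → ℝ} {x : EuclideanSpace ℝ (Fin n)}
    (hf : ContDiffAt ℝ 2 f x) (w : EuclideanSpace ℝ (Fin n)) :
    HasDerivAt (fun t : ℝ => fderiv ℝ f (x + t • w) w) (fderiv ℝ (fderiv ℝ f) x w w) 0 := by
  have hd : DifferentiableAt ℝ (fderiv ℝ f) x :=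
    (hf.fderiv_right (m := 1) (by norm_num)).differentiableAt (by norm_num)
  have hd' : HasFDerivAt (fderiv ℝ f) (fderiv ℝ (fderiv ℝ f) x) (x + (0 : ℝ) • w) := by
    simpa using hd.hasFDerivAt
  have := hd'.comp_hasDerivAt (0 : ℝ) (hasDerivAt_line x w 0)
  simpa using this.clm_apply (hasDerivAt_const (0 : ℝ) w)

lemma contDiffAt_of_isHarmonicOn {f : EuclideanSpace ℝ (Fin n) → ℝ}
    {U : Set (EuclideanSpace ℝ (Fin n))} (hU : IsOpen U) (hf : IsHarmonicOn f U)
    {x : EuclideanSpace ℝ (Fin n)} (hx : x ∈ U) : ContDiffAt ℝ 2 f x :=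
  hf.1.contDiffAt (hU.mem_nhds hx)

/-! ### The weak maximum principle -/

/-- The perturbation `f + ε‖·‖²` has positive Laplacian, so its maximum over the compact closure
is attained on the boundary. -/
lemma harmonic_le_one (hn : 0 < n) {f : EuclideanSpace ℝ (Fin n) → ℝ}
    {U : Set (EuclideanSpace ℝ (Fin n))} (hU : IsOpen U) (hUb : U ⊆ ball 0 2)
    (hc : ContinuousOn f (closure U)) (hf : IsHarmonicOn f U)
    (hb : ∀ x ∈ closure U, x ∉ U → f x ≤ 1) : ∀ x ∈ closure U, f x ≤ 1 := by
  intro x hx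
  by_contra! hlt
  have hcl : closure U ⊆ closedBall 0 2 := closure_minimal (hUb.trans ball_subset_closedBall)
    isClosed_closedBall
  have hK : IsCompact (closure U) :=
    (isCompact_closedBall (0 : EuclideanSpace ℝ (Fin n)) 2).of_isClosed_subset isClosed_closure hcl
  -- On the closure `‖·‖² ≤ 4`, so this perturbation moves values by less than `f x - 1`.
  set ε : ℝ := (f x - 1) / 8 with hε
  have hε0 : 0 < ε := by rw [hε]; linarith
  obtain ⟨p, hp, hmax⟩ := hK.exists_isMaxOn (f := fun y => f y + ε * ‖y‖ ^ 2) ⟨x, hx⟩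
    (hc.add (by fun_prop))
  have hpU : p ∈ U := by
    by_contra hpU
    have h1 := hb p hp hpU
    have h2 : f x + ε * ‖x‖ ^ 2 ≤ f p + ε * ‖p‖ ^ 2 := hmax hx
    have h3 : ‖p‖ ≤ 2 := by simpa using hcl hp
    have h4 : ‖p‖ ^ 2 ≤ 4 := by nlinarith [norm_nonneg p]
    nlinarith [sq_nonneg ‖x‖, mul_le_mul_of_nonneg_left h4 hε0.le,
      mul_nonneg hε0.le (sq_nonneg ‖x‖)]
  have hcd := contDiffAt_of_isHarmonicOn hU hf hpU
  have hdir : ∀ i, fderiv ℝ (fderiv ℝ f) p (EuclideanSpace.basisFun (Fin n) ℝ i)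
      (EuclideanSpace.basisFun (Fin n) ℝ i) + 2 * ε ≤ 0 := by
    intro i
    set w := EuclideanSpace.basisFun (Fin n) ℝ i with hw
    have hw1 : ‖w‖ = 1 := (EuclideanSpace.basisFun (Fin n) ℝ).norm_eq_one i
    refine second_deriv_nonpos_of_isLocalMax
      (φ := fun t => f (p + t • w) + ε * ‖p + t • w‖ ^ 2)
      (φ' := fun t => fderiv ℝ f (p + t • w) w + ε * (2 * inner ℝ (p + t • w) w)) ?_ ?_ ?_
    · filter_upwards [hasDerivAt_comp_line hcd w] with t ht
      exact ht.add ((hasDerivAt_line p w t).norm_sq.const_mul ε)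
    · have h := (hasDerivAt_line p w 0).inner ℝ (hasDerivAt_const (0 : ℝ) w)
      have h2 := (hasDerivAt_fderiv_line hcd w).add ((h.const_mul 2).const_mul ε)
      refine h2.congr_deriv ?_
      simp [hw1]
      ring
    · have : ∀ᶠ t in 𝓝 (0 : ℝ), p + t • w ∈ U :=
        (tendsto_line p w).eventually (hU.mem_nhds hpU)
      filter_upwards [this] with t ht
      simpa using hmax (subset_closure ht)
  have hsum := Finset.sum_nonpos fun i (_ : i ∈ Finset.univ) => hdir i
  rw [Finset.sum_add_distrib, ← lapl_eq_sum_basis hcd, hf.2 p hpU] at hsum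
  simp at hsum
  have : (0 : ℝ) < n := by exact_mod_cast hn
  nlinarith [mul_pos this hε0]

/-! ### The two-point maximum principle -/

/-- The strictly concave profile against which `√(u(x) v(y))` is compared as a function of
the distance `s = ‖x - y‖`. -/
noncomputable def profile (r s : ℝ) : ℝ := r + s - s ^ 2 / 8

lemma hasDerivAt_profile (r : ℝ) {g : ℝ → ℝ} {g' t : ℝ} (hg : HasDerivAt g g' t) :
    HasDerivAt (fun t => profile r (g t)) (g' * (1 - g t / 4)) t := by
  have := (hg.const_add r).sub ((hg.pow 2).div_const 8)
  refine this.congr_deriv ?_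
  simp
  ring

lemma hasDerivAt_norm_line {z : EuclideanSpace ℝ (Fin n)} (hz : z ≠ 0)
    (w : EuclideanSpace ℝ (Fin n)) :
    HasDerivAt (fun t : ℝ => ‖z + t • w‖) (inner ℝ (‖z‖⁻¹ • z) w) 0 := by
  have hne : ‖z‖ ≠ 0 := norm_ne_zero_iff.2 hz
  have h := ((hasDerivAt_line z w 0).norm_sq).sqrt (by simpa using hz)
  have e : (fun t : ℝ => √(‖z + t • w‖ ^ 2)) = fun t : ℝ => ‖z + t • w‖ := by
    funext t; exact Real.sqrt_sq (norm_nonneg _)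
  have h' : HasDerivAt (fun t : ℝ => √(‖z + t • w‖ ^ 2)) _ 0 := h
  rw [e] at h'
  refine h'.congr_deriv ?_
  simp [real_inner_smul_left, Real.sqrt_sq]
  field_simp

/-- If `u` and `v` are harmonic, `(x', y') ↦ u x' * v y' - m * (profile r ‖x' - y'‖)²` cannot have
a zero local maximum off the diagonal. With `R` the reflection reversing `x - y`, the second
derivatives in the directions `(w, R w)`, summed over an orthonormal basis, give
`2 m * profile r ‖x - y‖ > 0`. -/
lemma no_interior_contact {u v : EuclideanSpace ℝ (Fin n) → ℝ} {x y : EuclideanSpace ℝ (Fin n)}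
    (hu : ContDiffAt ℝ 2 u x) (hv : ContDiffAt ℝ 2 v y) (hul : lapl u x = 0) (hvl : lapl v y = 0)
    (hxy : x ≠ y) {m r : ℝ} (hm : 0 < m)
    (hpr : 0 < profile r ‖x - y‖)
    (heq : u x * v y = m * profile r ‖x - y‖ ^ 2)
    (hle : ∀ᶠ p : EuclideanSpace ℝ (Fin n) × EuclideanSpace ℝ (Fin n) in 𝓝 (x, y),
      u p.1 * v p.2 ≤ m * profile r ‖p.1 - p.2‖ ^ 2) : False := by
  set z := x - y with hz
  have hz0 : z ≠ 0 := sub_ne_zero.2 hxy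
  have hs : 0 < ‖z‖ := norm_pos_iff.2 hz0
  set e := ‖z‖⁻¹ • z with he
  have he1 : ‖e‖ = 1 := by rw [he, norm_smul, norm_inv, norm_norm, inv_mul_cancel₀ hs.ne']
  have hze : z = ‖z‖ • e := by rw [he, smul_smul, mul_inv_cancel₀ hs.ne', one_smul]
  set H := profile r ‖z‖ with hH
  set H1 := 1 - ‖z‖ / 4 with hH1
  have hline : ∀ w w' : EuclideanSpace ℝ (Fin n), ∀ᶠ t in 𝓝 (0 : ℝ),
      u (x + t • w) * v (y + t • w') ≤ m * profile r ‖(x + t • w) - (y + t • w')‖ ^ 2 := by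
    intro w w'
    exact ((tendsto_line x w).prodMk_nhds (tendsto_line y w')).eventually hle
  have hux' := fun w => (hasDerivAt_comp_line hu w).self_of_nhds
  have hvy' := fun w => (hasDerivAt_comp_line hv w).self_of_nhds
  simp only [zero_smul, add_zero] at hux' hvy'
  have hgu : ∀ w, fderiv ℝ u x w * v y = 2 * m * H * H1 * inner ℝ e w := by
    intro w
    have hmax : IsLocalMax (fun t : ℝ => u (x + t • w) * v y - m * profile r ‖z + t • w‖ ^ 2) 0 := by
      filter_upwards [hline w 0] with t ht
      have e1 : x + t • w - (y + t • (0 : EuclideanSpace ℝ (Fin n))) = z + t • w := by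
        rw [hz]; module
      rw [e1] at ht
      simp only [smul_zero, add_zero, zero_smul] at ht ⊢
      linarith
    have hd := ((hux' w).mul_const (v y)).sub
      (((hasDerivAt_profile r (hasDerivAt_norm_line hz0 w)).pow 2).const_mul m)
    have := hmax.hasDerivAt_eq_zero hd
    simp only [zero_smul, add_zero] at this
    norm_num at this
    rw [← he, ← hH] at this
    rw [hH1]
    linarith
  have hgv : ∀ w, u x * fderiv ℝ v y w = -(2 * m * H * H1 * inner ℝ e w) := by
    intro w
    have hmax : IsLocalMax
        (fun t : ℝ => u x * v (y + t • w) - m * profile r ‖z + t • (-w)‖ ^ 2) 0 := by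
      filter_upwards [hline 0 w] with t ht
      have e1 : x + t • (0 : EuclideanSpace ℝ (Fin n)) - (y + t • w) = z + t • (-w) := by
        rw [hz]; module
      rw [e1] at ht
      simp only [smul_zero, add_zero, zero_smul] at ht ⊢
      linarith
    have hd := ((hvy' w).const_mul (u x)).sub
      (((hasDerivAt_profile r (hasDerivAt_norm_line hz0 (-w))).pow 2).const_mul m)
    have := hmax.hasDerivAt_eq_zero hd
    simp only [zero_smul, add_zero] at this
    norm_num at this
    rw [← he, ← hH] at this
    rw [hH1]
    linarith
  set R := (ℝ ∙ e)ᗮ.reflection with hR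
  have hRw : ∀ w, R w = w - (2 * inner ℝ e w) • e := by
    intro w
    rw [hR, Submodule.reflection_orthogonal_apply, Submodule.reflection_singleton_apply]
    simp only [he1]
    simp
    module
  set b := EuclideanSpace.basisFun (Fin n) ℝ with hb
  have hdir : ∀ w, fderiv ℝ (fderiv ℝ u) x w w * v y + u x * fderiv ℝ (fderiv ℝ v) y (R w) (R w)
      + 2 * m * H * inner ℝ e w ^ 2 ≤ 0 := by
    intro w
    set c := inner ℝ e w with hc
    have hce : inner ℝ e (R w) = -c := by
      rw [hRw, inner_sub_right, real_inner_smul_right, real_inner_self_eq_norm_sq, he1]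
      ring
    -- Along `(w, R w)` the distance is the affine function `‖z‖ + 2 c t`.
    have hdist : ∀ᶠ t in 𝓝 (0 : ℝ), ‖(x + t • w) - (y + t • R w)‖ = ‖z‖ + (2 * c) * t := by
      have hpos : ∀ᶠ t in 𝓝 (0 : ℝ), 0 < ‖z‖ + (2 * c) * t := by
        have : ContinuousAt (fun t : ℝ => ‖z‖ + (2 * c) * t) 0 := by fun_prop
        exact this.eventually (lt_mem_nhds (by simpa using hs))
      filter_upwards [hpos] with t ht
      have : (x + t • w) - (y + t • R w) = (‖z‖ + (2 * c) * t) • e := by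
        rw [add_smul, ← hze, hRw, hz]; module
      rw [this, norm_smul, he1, mul_one, Real.norm_of_nonneg ht.le]
    have hlin : ∀ t : ℝ, HasDerivAt (fun t : ℝ => ‖z‖ + (2 * c) * t) (2 * c) t := by
      intro t
      simpa using ((hasDerivAt_id t).const_mul (2 * c)).const_add ‖z‖
    have key := second_deriv_nonpos_of_isLocalMax
      (φ := fun t => u (x + t • w) * v (y + t • R w) - m * profile r (‖z‖ + (2 * c) * t) ^ 2)
      (φ' := fun t => (fderiv ℝ u (x + t • w) w * v (y + t • R w)
        + u (x + t • w) * fderiv ℝ v (y + t • R w) (R w))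
        - m * (2 * profile r (‖z‖ + (2 * c) * t) * ((2 * c) * (1 - (‖z‖ + (2 * c) * t) / 4))))
      (a := fderiv ℝ (fderiv ℝ u) x w w * v y + 2 * (fderiv ℝ u x w * fderiv ℝ v y (R w))
        + u x * fderiv ℝ (fderiv ℝ v) y (R w) (R w) - m * (8 * c ^ 2 * H1 ^ 2 - 2 * c ^ 2 * H))
      ?_ ?_ ?_
    · -- The gradient identities turn the mixed term into `8 m c² H1²`, which cancels.
      have h1 := hgu w
      have h2 := hgv (R w)
      rw [hce] at h2
      have h3 : (fderiv ℝ u x w * fderiv ℝ v y (R w)) * (m * H ^ 2)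
          = (4 * m * c ^ 2 * H1 ^ 2) * (m * H ^ 2) := by
        rw [← heq]
        calc _ = (fderiv ℝ u x w * v y) * (u x * fderiv ℝ v y (R w)) := by ring
          _ = 4 * m * c ^ 2 * H1 ^ 2 * (m * H ^ 2) := by rw [h1, h2]; ring
          _ = _ := by rw [heq]
      have h4 := mul_right_cancel₀ (by positivity) h3
      rw [h4] at key
      linarith
    · filter_upwards [hasDerivAt_comp_line hu w, hasDerivAt_comp_line hv (R w)] with t h1 h2
      refine ((h1.mul h2).sub
        (((hasDerivAt_profile r (hlin t)).pow 2).const_mul m)).congr_deriv ?_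
      norm_num
    · have hU := hux' w
      have hV := hvy' (R w)
      have hq : HasDerivAt (fun t : ℝ => (2 * c) * (1 - (‖z‖ + (2 * c) * t) / 4))
          ((2 * c) * (-((2 * c) / 4))) 0 :=
        (((hlin 0).div_const 4).const_sub 1).const_mul (2 * c)
      refine ((((hasDerivAt_fderiv_line hu w).mul hV).add
        (hU.mul (hasDerivAt_fderiv_line hv (R w)))).sub
        ((((hasDerivAt_profile r (hlin 0)).const_mul 2).mul hq).const_mul m)).congr_deriv ?_
      simp only [zero_smul, add_zero, mul_zero, ← hH, hH1]
      ring
    · filter_upwards [hline w (R w), hdist] with t h1 h2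
      rw [h2] at h1
      simp only [zero_smul, add_zero, mul_zero, ← hH]
      linarith
  have hsum := Finset.sum_nonpos fun i (_ : i ∈ Finset.univ) => hdir (b i)
  have hbu := lapl_eq_sum_basis hu b
  have hbv := lapl_eq_sum_basis hv (b.map R)
  simp only [OrthonormalBasis.map_apply] at hbv
  rw [Finset.sum_add_distrib, Finset.sum_add_distrib, ← Finset.sum_mul, ← Finset.mul_sum,
    ← Finset.mul_sum, ← hbu, ← hbv, hul, hvl] at hsum
  have hb2 : ∑ i, inner ℝ e (b i) ^ 2 = 1 := by
    have := b.sum_sq_inner_left e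
    rw [he1] at this
    simpa using this
  rw [hb2] at hsum
  have : 0 < m * H := mul_pos hm hpr
  linarith

end Lines

theorem stmt0 (n : ℕ) (hn : 3 ≤ n) :
    ∃ M : ℝ, 0 < M ∧
      ∀ (Ω₀ : Set (EuclideanSpace ℝ (Fin n))) (hp hm : EuclideanSpace ℝ (Fin n) → ℝ),
        IsOpen Ω₀ → Bornology.IsBounded Ω₀ →
        ball (0 : EuclideanSpace ℝ (Fin n)) (4/3) ⊆ Ω₀ →
        Ω₀ ⊆ ball (0 : EuclideanSpace ℝ (Fin n)) (5/3) →
        (∀ y ∈ ball (0 : EuclideanSpace ℝ (Fin n)) 1, ∀ x ∈ Ω₀, segment ℝ y x ⊆ Ω₀) →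
        ContinuousOn hp (closure (Ω₀ \ closedBall 0 1)) →
        IsHarmonicOn hp (Ω₀ \ closedBall 0 1) →
        (∀ x ∈ frontier Ω₀, hp x = 0) →
        (∀ x ∈ sphere (0 : EuclideanSpace ℝ (Fin n)) 1, hp x = 1) →
        ContinuousOn hm (closure (ball (0 : EuclideanSpace ℝ (Fin n)) 2 \ closure Ω₀)) →
        IsHarmonicOn hm (ball 0 2 \ closure Ω₀) →
        (∀ x ∈ frontier Ω₀, hm x = 0) →
        (∀ x ∈ sphere (0 : EuclideanSpace ℝ (Fin n)) 2, hm x = 1) →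
        ∀ x₀ ∈ frontier Ω₀, ∀ r : ℝ, 0 < r → r ≤ 1/6 →
          M ≤ hp (x₀ - r • (‖x₀‖⁻¹ • x₀)) / r →
          hm (x₀ + r • (‖x₀‖⁻¹ • x₀)) / r ≤ 1 := by
  refine ⟨144, by norm_num, ?_⟩
  intro Ω hp hm hΩo _ hin hout hstar hpc hph hp0 hp1 hmc hmh hm0 hm1 x₀ hx₀ r hr hr6 hM
  by_contra! hcon
  have hx₀n : x₀ ∉ Ω := by
    rw [hΩo.frontier_eq] at hx₀; exact hx₀.2
  have hx₀c : x₀ ∈ closure Ω := frontier_subset_closure hx₀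
  have hnorm1 : 4 / 3 ≤ ‖x₀‖ := by
    by_contra! h
    exact hx₀n (hin (by simpa using h))
  have hclΩ : closure Ω ⊆ closedBall (0 : EuclideanSpace ℝ (Fin n)) (5 / 3) :=
    closure_minimal (hout.trans ball_subset_closedBall) isClosed_closedBall
  have hnorm2 : ‖x₀‖ ≤ 5 / 3 := by simpa using hclΩ hx₀c
  have hpos : 0 < ‖x₀‖ := by linarith
  set q := x₀ - r • (‖x₀‖⁻¹ • x₀) with hq
  set p := x₀ + r • (‖x₀‖⁻¹ • x₀) with hp'
  have hqs : q = ((‖x₀‖ - r) / ‖x₀‖) • x₀ := by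
    rw [hq, sub_div, div_self hpos.ne', div_eq_mul_inv]; module
  have hps : p = ((‖x₀‖ + r) / ‖x₀‖) • x₀ := by
    rw [hp', add_div, div_self hpos.ne', div_eq_mul_inv]; module
  have hqn : ‖q‖ = ‖x₀‖ - r := by
    rw [hqs, norm_smul, Real.norm_of_nonneg (div_nonneg (by linarith) hpos.le)]; field_simp
  have hpn : ‖p‖ = ‖x₀‖ + r := by
    rw [hps, norm_smul, Real.norm_of_nonneg (div_nonneg (by linarith) hpos.le)]; field_simp
  have hseg : ∀ t : ℝ, 0 ≤ t → t ≤ 1 → ∀ a ∈ Ω, t • a ∈ Ω := by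
    intro t h0 h1 a ha
    refine hstar 0 (by simp) a ha ⟨1 - t, t, by linarith, h0, by ring, by simp⟩
  have hqv : 144 * r ≤ hp q := (le_div_iff₀ hr).1 hM
  have hpv : r < hm p := by
    have := (lt_div_iff₀ hr).1 hcon; linarith
  have hqcl : q ∈ closure Ω := by
    rw [hqs]
    have hmaps : MapsTo (fun a : EuclideanSpace ℝ (Fin n) => ((‖x₀‖ - r) / ‖x₀‖) • a) Ω Ω := fun a ha =>
      hseg _ (div_nonneg (by linarith) hpos.le) ((div_le_one hpos).2 (by linarith)) a ha
    exact hmaps.closure (by fun_prop) hx₀c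
  have hqΩ : q ∈ Ω := by
    by_contra h
    have : hp q = 0 := hp0 q (by rw [hΩo.frontier_eq]; exact ⟨hqcl, h⟩)
    linarith
  have hpΩ : p ∉ Ω := by
    intro h
    apply hx₀n
    have := hseg (‖x₀‖ / (‖x₀‖ + r)) (by positivity) ((div_le_one (by linarith)).2 (by linarith)) p h
    rwa [hps, smul_smul, div_mul_div_cancel₀ (by linarith), div_self hpos.ne', one_smul] at this
  have hpcl : p ∉ closure Ω := by
    intro h
    have : hm p = 0 := hm0 p (by rw [hΩo.frontier_eq]; exact ⟨h, hpΩ⟩)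
    linarith
  set U := Ω \ closedBall (0 : EuclideanSpace ℝ (Fin n)) 1 with hU
  set V := ball (0 : EuclideanSpace ℝ (Fin n)) 2 \ closure Ω with hV
  have hUo : IsOpen U := hΩo.sdiff isClosed_closedBall
  have hVo : IsOpen V := isOpen_ball.sdiff isClosed_closure
  have hqU : q ∈ U := ⟨hqΩ, by simp [hqn]; linarith⟩
  have hpV : p ∈ V := ⟨by simp [hpn]; linarith, hpcl⟩
  have hUcl : ∀ x ∈ closure U, x ∈ closure Ω ∧ 1 ≤ ‖x‖ := by
    intro x hx
    refine ⟨closure_mono sdiff_subset hx, ?_⟩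
    have hc : IsClosed {x : EuclideanSpace ℝ (Fin n) | 1 ≤ ‖x‖} :=
      isClosed_le continuous_const continuous_norm
    refine closure_minimal (fun a ha => ?_) hc hx
    have := ha.2
    simp only [mem_closedBall, dist_zero_right, not_le] at this
    exact this.le
  have hVcl : ∀ y ∈ closure V, y ∉ Ω ∧ ‖y‖ ≤ 2 := by
    intro y hy
    constructor
    · exact closure_minimal (t := Ωᶜ) (fun a ha h => ha.2 (subset_closure h)) hΩo.isClosed_compl hy
    · have := closure_minimal (t := closedBall (0 : EuclideanSpace ℝ (Fin n)) 2)
        (fun a ha => ball_subset_closedBall ha.1) isClosed_closedBall hy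
      simpa using this
  have hUb : ∀ x ∈ closure U, x ∉ U → hp x = 0 ∨ ‖x‖ = 1 := by
    intro x hx hxU
    obtain ⟨h1, h2⟩ := hUcl x hx
    by_cases hxΩ : x ∈ Ω
    · right
      by_contra hne
      exact hxU ⟨hxΩ, by simpa using lt_of_le_of_ne h2 (Ne.symm hne)⟩
    · left
      exact hp0 x (by rw [hΩo.frontier_eq]; exact ⟨h1, hxΩ⟩)
  have hVb : ∀ y ∈ closure V, y ∉ V → hm y = 0 ∨ ‖y‖ = 2 := by
    intro y hy hyV
    obtain ⟨h1, h2⟩ := hVcl y hy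
    by_cases hyΩ : y ∈ closure Ω
    · left
      exact hm0 y (by rw [hΩo.frontier_eq]; exact ⟨hyΩ, h1⟩)
    · right
      by_contra hne
      exact hyV ⟨by simpa using lt_of_le_of_ne h2 hne, hyΩ⟩
  have hp1' : ∀ x : EuclideanSpace ℝ (Fin n), ‖x‖ = 1 → hp x = 1 :=
    fun x hx => hp1 x (by simpa using hx)
  have hm1' : ∀ x : EuclideanSpace ℝ (Fin n), ‖x‖ = 2 → hm x = 1 :=
    fun x hx => hm1 x (by simpa using hx)
  have hUle : ∀ x ∈ closure U, hp x ≤ 1 := by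
    refine harmonic_le_one (by omega) hUo
      (fun a ha => ball_subset_ball (by norm_num) (hout ha.1)) hpc hph fun x hx hxU => ?_
    rcases hUb x hx hxU with h | h
    · rw [h]; norm_num
    · rw [hp1' x h]
  have hVle : ∀ y ∈ closure V, hm y ≤ 1 := by
    refine harmonic_le_one (by omega) hVo (fun a ha => ha.1) hmc hmh fun y hy hyV => ?_
    rcases hVb y hy hyV with h | h
    · rw [h]; norm_num
    · rw [hm1' y h]
  have hKU : IsCompact (closure U) :=
    (isCompact_closedBall (0 : EuclideanSpace ℝ (Fin n)) (5 / 3)).of_isClosed_subset isClosed_closure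
      fun x hx => hclΩ (hUcl x hx).1
  have hKV : IsCompact (closure V) :=
    (isCompact_closedBall (0 : EuclideanSpace ℝ (Fin n)) 2).of_isClosed_subset isClosed_closure
      fun y hy => by simpa using (hVcl y hy).2
  have hUn : ∀ x ∈ closure U, ‖x‖ ≤ 5 / 3 := fun x hx => by simpa using hclΩ (hUcl x hx).1
  have hVn : ∀ y ∈ closure V, 4 / 3 ≤ ‖y‖ := by
    intro y hy
    by_contra! h
    exact (hVcl y hy).1 (hin (by simpa using h))
  have hdist : ∀ x ∈ closure U, ∀ y ∈ closure V, ‖x - y‖ ≤ 4 := by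
    intro x hx y hy
    linarith [norm_sub_le x y, hUn x hx, (hVcl y hy).2]
  have hprof : ∀ s, 0 ≤ s → s ≤ 4 → 0 < profile r s := by
    intro s h0 h4
    unfold profile
    nlinarith
  have hprof' : ∀ s, 1 / 3 ≤ s → s ≤ 4 → 1 / 4 ≤ profile r s := by
    intro s h0 h4
    unfold profile
    nlinarith
  have hprofc : Continuous (profile r) := by unfold profile; fun_prop
  -- Positive parts keep a product of two negative values from competing for the maximum.
  obtain ⟨⟨x, y⟩, hxy, hmax⟩ := (hKU.prod hKV).exists_isMaxOn
    (f := fun a : EuclideanSpace ℝ (Fin n) × EuclideanSpace ℝ (Fin n) =>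
      max (hp a.1) 0 * max (hm a.2) 0 / profile r ‖a.1 - a.2‖ ^ 2)
    ⟨(q, p), subset_closure hqU, subset_closure hpV⟩ (by
      refine ContinuousOn.div ?_ ?_ ?_
      · refine ContinuousOn.mul ?_ ?_
        · exact (hpc.comp continuousOn_fst fun a ha => ha.1).sup continuousOn_const
        · exact (hmc.comp continuousOn_snd fun a ha => ha.2).sup continuousOn_const
      · exact ((hprofc.comp (by fun_prop)).pow 2).continuousOn
      · intro a ha
        exact (pow_pos (hprof _ (norm_nonneg _) (hdist _ ha.1 _ ha.2)) 2).ne')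
  obtain ⟨hx, hy⟩ : x ∈ closure U ∧ y ∈ closure V := hxy
  set m := max (hp x) 0 * max (hm y) 0 / profile r ‖x - y‖ ^ 2 with hmdef
  have hle : ∀ a ∈ closure U, ∀ b ∈ closure V,
      max (hp a) 0 * max (hm b) 0 ≤ m * profile r ‖a - b‖ ^ 2 := by
    intro a ha b hb
    have : max (hp a) 0 * max (hm b) 0 / profile r ‖a - b‖ ^ 2 ≤ m :=
      hmax (show (a, b) ∈ closure U ×ˢ closure V from ⟨ha, hb⟩)
    exact (div_le_iff₀ (pow_pos (hprof _ (norm_nonneg _) (hdist _ ha _ hb)) 2)).1 this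
  have hP : 0 < profile r ‖x - y‖ := hprof _ (norm_nonneg _) (hdist _ hx _ hy)
  have heq : max (hp x) 0 * max (hm y) 0 = m * profile r ‖x - y‖ ^ 2 := by
    rw [hmdef]; field_simp
  have hm16 : 16 < m := by
    have h1 := hle q (subset_closure hqU) p (subset_closure hpV)
    have h2 : ‖q - p‖ = 2 * r := by
      have : q - p = (-(2 * r) * ‖x₀‖⁻¹) • x₀ := by rw [hq, hp']; module
      rw [this, norm_smul, norm_mul, norm_neg, norm_inv, norm_norm,
        Real.norm_of_nonneg (by linarith), mul_assoc, inv_mul_cancel₀ hpos.ne', mul_one]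
    rw [h2, max_eq_left (by linarith), max_eq_left (by linarith)] at h1
    have h3 : profile r (2 * r) ≤ 3 * r := by unfold profile; nlinarith
    have h4 := hprof (2 * r) (by linarith) (by linarith)
    have h5 : profile r (2 * r) ^ 2 ≤ 9 * r ^ 2 := by nlinarith
    have h6 : 144 * r ^ 2 < hp q * hm p := by nlinarith
    by_contra! h7
    have h8 : m * profile r (2 * r) ^ 2 ≤ 16 * profile r (2 * r) ^ 2 := by gcongr
    linarith
  have hm0' : 0 < m := by linarith
  have hprod : 0 < max (hp x) 0 * max (hm y) 0 := by rw [heq]; positivity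
  have hux : 0 < hp x := by
    by_contra! h
    rw [max_eq_right h, zero_mul] at hprod
    exact hprod.false
  have hvy : 0 < hm y := by
    by_contra! h
    rw [max_eq_right h, mul_zero] at hprod
    exact hprod.false
  have hfar : ¬ 1 / 3 ≤ ‖x - y‖ := by
    intro h
    have h1 := hprof' _ h (hdist _ hx _ hy)
    rw [max_eq_left hux.le, max_eq_left hvy.le] at heq
    have h2 : hp x * hm y ≤ 1 := mul_le_one₀ (hUle x hx) hvy.le (hVle y hy)
    have h3 : 1 / 16 ≤ profile r ‖x - y‖ ^ 2 := by nlinarith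
    nlinarith
  have hxU : x ∈ U := by
    by_contra h
    rcases hUb x hx h with h1 | h1
    · linarith
    · apply hfar
      have := norm_sub_norm_le y x
      rw [norm_sub_rev] at this
      linarith [hVn y hy]
  have hyV : y ∈ V := by
    by_contra h
    rcases hVb y hy h with h1 | h1
    · linarith
    · apply hfar
      have := norm_sub_norm_le y x
      rw [norm_sub_rev] at this
      linarith [hUn x hx]
  have hne : x ≠ y := fun h => hyV.2 (h ▸ subset_closure hxU.1)
  rw [max_eq_left hux.le, max_eq_left hvy.le] at heq
  have hcu := contDiffAt_of_isHarmonicOn hUo hph hxU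
  have hcv := contDiffAt_of_isHarmonicOn hVo hmh hyV
  refine no_interior_contact hcu hcv (hph.2 x hxU) (hmh.2 y hyV) hne hm0' hP heq ?_
  have hnear : ∀ᶠ a : EuclideanSpace ℝ (Fin n) × EuclideanSpace ℝ (Fin n) in 𝓝 (x, y),
      0 < hp a.1 ∧ 0 < hm a.2 :=
    ((continuousAt_fst (p := (x, y))).tendsto.eventually
      (hcu.continuousAt.eventually (lt_mem_nhds hux))).and
    ((continuousAt_snd (p := (x, y))).tendsto.eventually
      (hcv.continuousAt.eventually (lt_mem_nhds hvy)))
  filter_upwards [hnear, prod_mem_nhds (hUo.mem_nhds hxU) (hVo.mem_nhds hyV)] with a ha hab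
  have := hle a.1 (subset_closure hab.1) a.2 (subset_closure hab.2)
  rwa [max_eq_left ha.1.le, max_eq_left ha.2.le] at this
end

section
/- There exists a constant C > 0 depending only on the dimension n such that for every x₀ ∈ ∂Ω₀, with e = x₀/|x₀|, and every 0 < r ≤ 1/6, one has (h₊(x₀ − r·e)/r) · (h₋(x₀ + r·e)/r) ≤ C. -/
/-!
The bound is obtained from a two-point maximum principle, with `C = 36`.

Write `u = h₊`, `v = h₋`. The claim `u x * v y ≤ 9 |x - y|²` for all `x`, `y` in the two closed
regions gives the theorem on taking `x = x₀ - r e`, `y = x₀ + r e`, `|x - y| = 2 r`. Consider a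
maximum point `(x, y)` of `Z = u(x) v(y) / |x - y|²`, with value `M` and `z = x - y`.

If `x` and `y` are both interior, the first-order conditions read `v ∇u = 2 M z`,
`u ∇v = -2 M z`. Differentiate `u(x) v(y) - M |x - y|²` twice in the directions `(eᵢ, A eᵢ)`, where
`A` is the reflection in the hyperplane orthogonal to `z`, and sum over `i`. The Laplacian is
invariant under `A`, and the sum is `v Δu + u Δv + 2 ∇u · A∇v - 8 M = v Δu + u Δv + 8 M - 8 M`.
At a maximum it is nonpositive, which is impossible when `Δu, Δv > 0`
(`two_point_max_principle`).

If `|x| = 1` or `|y| = 2`, then `|x - y| ≥ 1/3`, since `B_{4/3} ⊆ Ω₀ ⊆ B_{5/3}`, so `Z ≤ 9`,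
using `u, v ≤ 1`.

Replacing `u` by `u - 5 ε + ε |x|²`, and `v` likewise, makes the Laplacians strictly positive and
also keeps the sets where these functions are nonnegative away from `∂Ω₀`, so that the maximum of
`Z` is attained (`mul_le_nine_mul_dist_sq`). Star-shapedness serves only to locate `x₀ ± r e` in
the correct regions.
-/

open Metric Set

open Filter Topology

/-! ### Second derivatives along lines and the Laplacian -/

/-- First- and second-derivative test at a local maximum, with the derivatives given explicitly. -/
theorem deriv_test_of_isLocalMax {φ φ' : ℝ → ℝ} {k : ℝ}
    (h1 : ∀ᶠ t in 𝓝 (0 : ℝ), HasDerivAt φ (φ' t) t) (h2 : HasDerivAt φ' k 0)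
    (hmax : IsLocalMax φ 0) : φ' 0 = 0 ∧ k ≤ 0 := by
  have h0 : HasDerivAt φ (φ' 0) 0 := h1.self_of_nhds
  have hd0 : φ' 0 = 0 := hmax.hasDerivAt_eq_zero h0
  refine ⟨hd0, ?_⟩
  by_contra! hk
  have hder : deriv φ =ᶠ[𝓝 0] φ' := h1.mono fun t ht => ht.deriv
  have hdd : deriv (deriv φ) 0 = k := by rw [hder.deriv_eq, h2.deriv]
  have hmin : IsLocalMin φ 0 :=
    isLocalMin_of_deriv_deriv_pos (by rw [hdd]; exact hk) (by rw [h0.deriv, hd0]) h0.continuousAt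
  have hconst : φ =ᶠ[𝓝 0] fun _ => φ 0 := by
    filter_upwards [hmin, hmax] with t ht1 ht2 using le_antisymm ht2 ht1
  have : deriv (deriv φ) 0 = 0 := by
    rw [hconst.deriv.deriv_eq]; simp
  linarith

section
variable {n : ℕ}
local notation "E" => EuclideanSpace ℝ (Fin n)

theorem hasDerivAt_line_s1 {U : E → ℝ} {x : E} (hU : ContDiffAt ℝ 2 U x) (e : E) :
    (∀ᶠ t in 𝓝 (0 : ℝ), HasDerivAt (fun t : ℝ => U (x + t • e)) (fderiv ℝ U (x + t • e) e) t) ∧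
    HasDerivAt (fun t : ℝ => fderiv ℝ U (x + t • e) e) (fderiv ℝ (fderiv ℝ U) x e e) 0 := by
  have hl : ∀ t : ℝ, HasDerivAt (fun t : ℝ => x + t • e) e t := fun t => by
    simpa using ((hasDerivAt_id t).smul_const e).const_add x
  have hl0 : Tendsto (fun t : ℝ => x + t • e) (𝓝 0) (𝓝 x) := by
    simpa using (hl 0).continuousAt.tendsto
  constructor
  · have : ∀ᶠ y in 𝓝 x, DifferentiableAt ℝ U y :=
      (hU.eventually (by simp)).mono fun y hy => hy.differentiableAt (by norm_num)
    filter_upwards [hl0.eventually this] with t ht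
    exact ht.hasFDerivAt.comp_hasDerivAt t (hl t)
  · have hd : DifferentiableAt ℝ (fderiv ℝ U) x :=
      (hU.fderiv_right (m := 1) (by norm_num)).differentiableAt (by norm_num)
    have h1 : HasDerivAt (fun t : ℝ => fderiv ℝ U (x + t • e)) (fderiv ℝ (fderiv ℝ U) x e) 0 :=
      hd.hasFDerivAt.comp_hasDerivAt_of_eq 0 (hl 0) (by simp)
    simpa using h1.clm_apply (hasDerivAt_const (0 : ℝ) e)

theorem lapl_eq_sum {U : E → ℝ} {x : E} (hU : ContDiffAt ℝ 2 U x) :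
    lapl U x = ∑ i : Fin n, fderiv ℝ (fderiv ℝ U) x
      (EuclideanSpace.single i (1:ℝ)) (EuclideanSpace.single i (1:ℝ)) := by
  have hd : DifferentiableAt ℝ (fderiv ℝ U) x :=
    (hU.fderiv_right (m := 1) (by norm_num)).differentiableAt (by norm_num)
  unfold lapl
  refine Finset.sum_congr rfl fun i _ => ?_
  rw [fderiv_clm_apply hd (differentiableAt_const _)]
  simp

theorem sum_coord_mul_single (z : E) (L : E →L[ℝ] ℝ) :
    ∑ i : Fin n, z i * L (EuclideanSpace.single i (1:ℝ)) = L z := by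
  conv_rhs => rw [← (EuclideanSpace.basisFun (Fin n) ℝ).sum_repr z]
  simp [map_sum]

theorem lapl_add_normSq {u : E → ℝ} {x : E} (hu : ContDiffAt ℝ 2 u x) (c ε : ℝ) :
    lapl (fun y => u y - c + ε * ‖y‖ ^ 2) x = lapl u x + 2 * n * ε := by
  have hd : DifferentiableAt ℝ (fderiv ℝ u) x :=
    (hu.fderiv_right (m := 1) (by norm_num)).differentiableAt (by norm_num)
  have hev : ∀ᶠ y in 𝓝 x, DifferentiableAt ℝ u y :=
    (hu.eventually (by simp)).mono fun y hy => hy.differentiableAt (by norm_num)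
  have key : ∀ i : Fin n,
      fderiv ℝ (fun y => fderiv ℝ (fun y => u y - c + ε * ‖y‖ ^ 2) y
        (EuclideanSpace.single i (1:ℝ))) x (EuclideanSpace.single i (1:ℝ)) =
      fderiv ℝ (fun y => fderiv ℝ u y (EuclideanSpace.single i (1:ℝ))) x
        (EuclideanSpace.single i (1:ℝ)) + 2 * ε := by
    intro i
    have h1 : (fun y => fderiv ℝ (fun y => u y - c + ε * ‖y‖ ^ 2) y
        (EuclideanSpace.single i (1:ℝ))) =ᶠ[𝓝 x]
        fun y => fderiv ℝ u y (EuclideanSpace.single i (1:ℝ)) +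
          (2 * ε) * EuclideanSpace.proj (𝕜 := ℝ) i y := by
      filter_upwards [hev] with y hy
      have := ((hy.hasFDerivAt.sub_const c).fun_add
        ((hasStrictFDerivAt_norm_sq y).hasFDerivAt.const_mul ε))
      rw [HasFDerivAt.fderiv this]
      simp [EuclideanSpace.inner_single_right]
      ring
    rw [h1.fderiv_eq]
    have h2 : HasFDerivAt (fun y => fderiv ℝ u y (EuclideanSpace.single i (1:ℝ)))
        (fderiv ℝ (fun y => fderiv ℝ u y (EuclideanSpace.single i (1:ℝ))) x) x :=
      (hd.clm_apply (differentiableAt_const _)).hasFDerivAt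
    rw [HasFDerivAt.fderiv (h2.fun_add
      ((EuclideanSpace.proj (𝕜 := ℝ) i).hasFDerivAt.const_mul (2 * ε)))]
    simp
  unfold lapl
  rw [Finset.sum_congr rfl fun i _ => key i, Finset.sum_add_distrib]
  simp
  ring

theorem not_isLocalMax_of_lapl_pos {U : E → ℝ} {x : E} (hU : ContDiffAt ℝ 2 U x)
    (hpos : 0 < lapl U x) : ¬ IsLocalMax U x := by
  intro hmax
  rw [lapl_eq_sum hU] at hpos
  refine absurd hpos (not_lt.mpr (Finset.sum_nonpos fun i _ => ?_))
  set e : E := EuclideanSpace.single i (1:ℝ)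
  obtain ⟨h1, h2⟩ := hasDerivAt_line_s1 hU e
  refine (deriv_test_of_isLocalMax h1 h2 ?_).2
  have hl0 : Tendsto (fun t : ℝ => x + t • e) (𝓝 0) (𝓝 x) := by
    have : Continuous (fun t : ℝ => x + t • e) := by fun_prop
    simpa using this.tendsto 0
  filter_upwards [hl0.eventually hmax] with t ht
  simpa using ht

/-! ### The two-point maximum principle -/

/-- First- and second-order conditions, in the direction `(e, f)`, at a local maximum `(x, y)`
of `U x * V y - M * ‖x - y‖ ^ 2` with value `0`. -/
theorem two_point_second_order {U V : E → ℝ} {x y : E} {M : ℝ}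
    (hU : ContDiffAt ℝ 2 U x) (hV : ContDiffAt ℝ 2 V y)
    (heq : U x * V y = M * ‖x - y‖ ^ 2)
    (hle : ∀ᶠ p : E × E in 𝓝 (x, y), U p.1 * V p.2 ≤ M * ‖p.1 - p.2‖ ^ 2) (e f : E) :
    fderiv ℝ U x e * V y + U x * fderiv ℝ V y f - 2 * M * inner ℝ (x - y) (e - f) = 0 ∧
    fderiv ℝ (fderiv ℝ U) x e e * V y + 2 * (fderiv ℝ U x e * fderiv ℝ V y f)
      + U x * fderiv ℝ (fderiv ℝ V) y f f - 2 * M * ‖e - f‖ ^ 2 ≤ 0 := by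
  obtain ⟨a1, a2⟩ := hasDerivAt_line_s1 hU e
  obtain ⟨b1, b2⟩ := hasDerivAt_line_s1 hV f
  set w := e - f
  set z := x - y
  have hc : ∀ t : ℝ, HasDerivAt
      (fun t : ℝ => M * (‖z‖ ^ 2 + 2 * t * inner ℝ z w + t ^ 2 * ‖w‖ ^ 2))
      (M * (2 * inner ℝ z w + 2 * t * ‖w‖ ^ 2)) t := by
    intro t
    have := ((((hasDerivAt_id t).const_mul 2).mul_const (inner ℝ z w)).const_add (‖z‖ ^ 2)).add
      ((hasDerivAt_pow 2 t).mul_const (‖w‖ ^ 2))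
    simpa using this.const_mul M
  have hc2 : HasDerivAt (fun t : ℝ => M * (2 * inner ℝ z w + 2 * t * ‖w‖ ^ 2))
      (M * (2 * ‖w‖ ^ 2)) 0 := by
    have := (((hasDerivAt_id (0:ℝ)).const_mul 2).mul_const (‖w‖ ^ 2)).const_add (2 * inner ℝ z w)
    simpa using this.const_mul M
  have key := deriv_test_of_isLocalMax
    (φ := fun t => U (x + t • e) * V (y + t • f)
      - M * (‖z‖ ^ 2 + 2 * t * inner ℝ z w + t ^ 2 * ‖w‖ ^ 2))
    (φ' := fun t => (fderiv ℝ U (x + t • e) e * V (y + t • f)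
      + U (x + t • e) * fderiv ℝ V (y + t • f) f) - M * (2 * inner ℝ z w + 2 * t * ‖w‖ ^ 2))
    (by filter_upwards [a1, b1] with t ht1 ht2 using (ht1.mul ht2).sub (hc t))
    (((a2.mul b1.self_of_nhds).add (a1.self_of_nhds.mul b2)).sub hc2)
    (by
      have hl0 : Tendsto (fun t : ℝ => (x + t • e, y + t • f)) (𝓝 0) (𝓝 (x, y)) := by
        have : Continuous (fun t : ℝ => (x + t • e, y + t • f)) := by fun_prop
        simpa using this.tendsto 0
      filter_upwards [hl0.eventually hle] with t ht
      have h3 : ‖x + t • e - (y + t • f)‖ ^ 2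
          = ‖z‖ ^ 2 + 2 * t * inner ℝ z w + t ^ 2 * ‖w‖ ^ 2 := by
        have : x + t • e - (y + t • f) = z + t • w := by
          simp only [z, w, smul_sub]; abel
        rw [this, norm_add_sq_real, inner_smul_right, norm_smul, mul_pow]
        simp; ring
      rw [h3] at ht
      simp only [zero_smul, add_zero, heq]
      simp only [z] at *
      nlinarith)
  simp only [zero_smul, add_zero, mul_zero, zero_mul] at key
  constructor
  · linarith [key.1]
  · linarith [key.2]

/-- If `ΔU` and `ΔV` are positive, then `U x * V y / ‖x - y‖ ^ 2` has no local maximum where both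
factors are positive. The second-order condition is summed over the directions `(eᵢ, A eᵢ)`, with
`A` the reflection in the hyperplane orthogonal to `x - y`. -/
theorem two_point_max_principle {U V : E → ℝ} {x y : E} {M : ℝ}
    (hU : ContDiffAt ℝ 2 U x) (hV : ContDiffAt ℝ 2 V y) (hUx : 0 < U x) (hVy : 0 < V y)
    (hxy : x ≠ y) (heq : U x * V y = M * ‖x - y‖ ^ 2)
    (hle : ∀ᶠ p : E × E in 𝓝 (x, y), U p.1 * V p.2 ≤ M * ‖p.1 - p.2‖ ^ 2)
    (hΔU : 0 < lapl U x) (hΔV : 0 < lapl V y) : False := by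
  have test := two_point_second_order hU hV heq hle
  set z := x - y with hz
  have hz0 : z ≠ 0 := sub_ne_zero.mpr hxy
  have hzpos : 0 < ‖z‖ ^ 2 := by positivity
  set s : ℝ := ‖z‖ ^ 2 with hs
  have hsum : ∑ i : Fin n, z i ^ 2 = s := by
    rw [hs, EuclideanSpace.real_norm_sq_eq]
  -- By the first-order conditions both gradients are multiples of `z`.
  have hDU : ∀ e, fderiv ℝ U x e = 2 * M * inner ℝ z e / V y := fun e => by
    have := (test e 0).1
    simp only [map_zero, mul_zero, add_zero, sub_zero] at this
    rw [eq_div_iff hVy.ne']; linarith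
  have hDV : ∀ e, fderiv ℝ V y e = - (2 * M * inner ℝ z e / U x) := fun e => by
    have := (test 0 e).1
    simp only [map_zero, zero_mul, zero_add, zero_sub, inner_neg_right] at this
    rw [← neg_div, eq_div_iff hUx.ne']; linarith
  set BU := fderiv ℝ (fderiv ℝ U) x
  set BV := fderiv ℝ (fderiv ℝ V) y
  let b : Fin n → E := fun i => EuclideanSpace.single i (1:ℝ)
  have hin : ∀ i, inner ℝ z (b i) = z i := fun i => by
    simp [b, EuclideanSpace.inner_single_right]
  -- The reflection sends `b i` to `b i - (2 * z i / s) • z`. The terms `8 * M / s * z i ^ 2` of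
  -- opposite sign come from the product of gradients and from `‖x - y‖ ^ 2`.
  have hterm : ∀ i : Fin n, BU (b i) (b i) * V y + 8 * M / s * z i ^ 2
      + U x * (BV (b i) (b i) - 2 / s * (z i * BV z (b i)) - 2 / s * (z i * BV (b i) z)
        + 4 / s ^ 2 * BV z z * z i ^ 2) - 8 * M / s * z i ^ 2 ≤ 0 := by
    intro i
    have h := (test (b i) (b i - (2 * z i / s) • z)).2
    have hzz : inner ℝ z z = s := by rw [real_inner_self_eq_norm_sq]
    have e1 : BV (b i - (2 * z i / s) • z) (b i - (2 * z i / s) • z)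
        = BV (b i) (b i) - 2 / s * (z i * BV z (b i)) - 2 / s * (z i * BV (b i) z)
        + 4 / s ^ 2 * BV z z * z i ^ 2 := by
      simp only [map_sub, map_smul, sub_apply,
        smul_apply, smul_eq_mul]
      field_simp
      ring
    have e2 : ‖b i - (b i - (2 * z i / s) • z)‖ ^ 2 = 4 / s * z i ^ 2 := by
      rw [sub_sub_cancel, norm_smul, mul_pow, ← hs, Real.norm_eq_abs, sq_abs]
      field_simp
      ring
    have e3 : fderiv ℝ U x (b i) * fderiv ℝ V y (b i - (2 * z i / s) • z)
        = 4 * M / s * z i ^ 2 := by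
      rw [hDU, hDV, inner_sub_right, inner_smul_right, hin, hzz]
      have : 2 * M * z i / V y * -(2 * M * (z i - 2 * z i / s * s) / U x)
          = 4 * M ^ 2 * z i ^ 2 / (U x * V y) := by
        field_simp
        ring
      rw [this, heq]
      have hM : M ≠ 0 := by
        rintro rfl
        rw [zero_mul] at heq
        exact (mul_pos hUx hVy).ne' heq
      field_simp
    rw [e1, e2, e3] at h
    convert h using 1
    ring
  have hS1 : ∑ i : Fin n, z i * BV z (b i) = BV z z := sum_coord_mul_single z (BV z)
  have hS2 : ∑ i : Fin n, z i * BV (b i) z = BV z z :=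
    sum_coord_mul_single z (BV.flip z)
  have hTU : ∑ i : Fin n, BU (b i) (b i) = lapl U x := (lapl_eq_sum hU).symm
  have hTV : ∑ i : Fin n, BV (b i) (b i) = lapl V y := (lapl_eq_sum hV).symm
  have htot := Finset.sum_nonpos fun i (_ : i ∈ Finset.univ) => hterm i
  simp only [Finset.sum_add_distrib, Finset.sum_sub_distrib, ← Finset.mul_sum,
    ← Finset.sum_mul, hS1, hS2, hTU, hTV, hsum] at htot
  -- The terms in `BV z z` cancel: the Laplacian of `V` is invariant under the reflection.
  have hcancel : 4 / s ^ 2 * BV z z * s = 2 / s * BV z z + 2 / s * BV z z := by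
    field_simp
    ring
  rw [hcancel] at htot
  nlinarith [mul_pos hΔU hVy, mul_pos hUx hΔV]

/-! ### The weak maximum principle -/

theorem IsHarmonicOn.contDiffAt {u : E → ℝ} {D : Set E} (h : IsHarmonicOn u D) (hD : IsOpen D)
    {x : E} (hx : x ∈ D) : ContDiffAt ℝ 2 u x := h.1.contDiffAt (hD.mem_nhds hx)

theorem le_of_frontier_le (hn : 0 < n) {D : Set E} (hD : IsOpen D) (hb : D ⊆ ball 0 2)
    {u : E → ℝ} (hc : ContinuousOn u (closure D)) (hu : IsHarmonicOn u D) {c : ℝ}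
    (hf : ∀ x ∈ frontier D, u x ≤ c) : ∀ x ∈ closure D, u x ≤ c := by
  intro x hx
  have hcl : closure D ⊆ closedBall 0 2 :=
    (closure_mono hb).trans closure_ball_subset_closedBall
  have hcomp : IsCompact (closure D) :=
    (isCompact_closedBall (0 : E) 2).of_isClosed_subset isClosed_closure hcl
  refine le_of_forall_pos_le_add fun δ hδ => ?_
  set ε := δ / 4
  have hε : 0 < ε := by positivity
  have hcg : ContinuousOn (fun y => u y - 0 + ε * ‖y‖ ^ 2) (closure D) :=
    (hc.sub continuousOn_const).add (by fun_prop)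
  obtain ⟨m, hm, hmax⟩ := hcomp.exists_isMaxOn ⟨x, hx⟩ hcg
  have hmD : m ∉ D := by
    intro hmD
    have hum := hu.contDiffAt hD hmD
    refine not_isLocalMax_of_lapl_pos (U := fun y => u y - 0 + ε * ‖y‖ ^ 2)
      (x := m) ((hum.sub contDiffAt_const).add
        (contDiffAt_const.mul (contDiff_norm_sq ℝ).contDiffAt)) ?_ ?_
    · rw [lapl_add_normSq hum, hu.2 m hmD]
      have : (0 : ℝ) < n := by exact_mod_cast hn
      positivity
    · exact (hmax.on_subset subset_closure).isLocalMax (hD.mem_nhds hmD)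
  have hmf : m ∈ frontier D := by rw [hD.frontier_eq]; exact ⟨hm, hmD⟩
  have h1 := hf m hmf
  have h2 := hmax hx
  have h3 : ‖m‖ ≤ 2 := by simpa using hcl hm
  have h4 : ‖m‖ ^ 2 ≤ 4 := by nlinarith [norm_nonneg m]
  have h5 : ε * ‖m‖ ^ 2 ≤ δ := by
    calc ε * ‖m‖ ^ 2 ≤ ε * 4 := by gcongr
      _ = δ := by simp only [ε]; ring
  simp only [mem_ofPred_eq, sub_zero] at h2
  nlinarith [mul_nonneg hε.le (sq_nonneg ‖x‖)]

theorem IsHarmonicOn.neg {u : E → ℝ} {D : Set E} (h : IsHarmonicOn u D) :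
    IsHarmonicOn (fun x => - u x) D := by
  refine ⟨h.1.neg, fun x hx => ?_⟩
  have := h.2 x hx
  unfold lapl at *
  simp only [fderiv_fun_neg, neg_apply, Finset.sum_neg_distrib, this, neg_zero]

theorem bounds_of_frontier (hn : 0 < n) {D : Set E} (hD : IsOpen D) (hb : D ⊆ ball 0 2)
    {u : E → ℝ} (hc : ContinuousOn u (closure D)) (hu : IsHarmonicOn u D)
    (hf : ∀ x ∈ frontier D, u x = 0 ∨ u x = 1) : ∀ x ∈ closure D, 0 ≤ u x ∧ u x ≤ 1 := by
  intro x hx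
  constructor
  · have := le_of_frontier_le hn hD hb hc.fun_neg hu.neg (c := 0)
      (fun x hx => by rcases hf x hx with h | h <;> simp [h]) x hx
    linarith
  · exact le_of_frontier_le hn hD hb hc hu
      (fun x hx => by rcases hf x hx with h | h <;> simp [h]) x hx

/-! ### The estimate for pairs of harmonic functions -/

/-- Two-point estimate. The hypothesis `hsep` says that points where `u` and `v` are positive are
distinct, and at distance at least `1 / 3` unless both are interior. -/
theorem mul_le_nine_mul_dist_sq (hn : 0 < n) {D₁ D₂ : Set E} (hD₁ : IsOpen D₁) (hD₂ : IsOpen D₂)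
    (hb₁ : D₁ ⊆ ball 0 2) (hb₂ : D₂ ⊆ ball 0 2) {u v : E → ℝ}
    (hcu : ContinuousOn u (closure D₁)) (hcv : ContinuousOn v (closure D₂))
    (hu : IsHarmonicOn u D₁) (hv : IsHarmonicOn v D₂)
    (hu1 : ∀ x ∈ closure D₁, u x ≤ 1) (hv1 : ∀ x ∈ closure D₂, v x ≤ 1)
    (hsep : ∀ x ∈ closure D₁, ∀ y ∈ closure D₂, 0 < u x → 0 < v y →
      x ≠ y ∧ ((x ∈ D₁ ∧ y ∈ D₂) ∨ 1 / 3 ≤ ‖x - y‖)) :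
    ∀ x ∈ closure D₁, ∀ y ∈ closure D₂, 0 < u x → 0 < v y → u x * v y ≤ 9 * ‖x - y‖ ^ 2 := by
  intro p hp q hq hup hvq
  have hcl : ∀ {D : Set E}, D ⊆ ball 0 2 → closure D ⊆ closedBall 0 2 := fun h =>
    (closure_mono h).trans closure_ball_subset_closedBall
  have hcomp : ∀ {D : Set E}, D ⊆ ball 0 2 → IsCompact (closure D) := fun h =>
    (isCompact_closedBall (0 : E) 2).of_isClosed_subset isClosed_closure (hcl h)
  have hnsq : ∀ {D : Set E}, D ⊆ ball 0 2 → ∀ x ∈ closure D, ‖x‖ ^ 2 ≤ 4 := fun h x hx => by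
    have : ‖x‖ ≤ 2 := by simpa using hcl h hx
    nlinarith [norm_nonneg x]
  by_contra! hcon
  -- The inequality still fails after a small perturbation making both Laplacians positive.
  obtain ⟨ε, hε, hUp, hVq, hfail⟩ : ∃ ε : ℝ, 0 < ε ∧ 0 < u p - 5 * ε + ε * ‖p‖ ^ 2 ∧
      0 < v q - 5 * ε + ε * ‖q‖ ^ 2 ∧ 9 * ‖p - q‖ ^ 2 <
        (u p - 5 * ε + ε * ‖p‖ ^ 2) * (v q - 5 * ε + ε * ‖q‖ ^ 2) := by
    have c1 : Continuous fun ε : ℝ => u p - 5 * ε + ε * ‖p‖ ^ 2 := by fun_prop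
    have c2 : Continuous fun ε : ℝ => v q - 5 * ε + ε * ‖q‖ ^ 2 := by fun_prop
    have e1 : ∀ᶠ ε in 𝓝 (0:ℝ), 0 < u p - 5 * ε + ε * ‖p‖ ^ 2 :=
      c1.continuousAt.eventually_const_lt (by simpa using hup)
    have e2 : ∀ᶠ ε in 𝓝 (0:ℝ), 0 < v q - 5 * ε + ε * ‖q‖ ^ 2 :=
      c2.continuousAt.eventually_const_lt (by simpa using hvq)
    have e3 : ∀ᶠ ε in 𝓝 (0:ℝ), 9 * ‖p - q‖ ^ 2 <
        (u p - 5 * ε + ε * ‖p‖ ^ 2) * (v q - 5 * ε + ε * ‖q‖ ^ 2) :=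
      (c1.mul c2).continuousAt.eventually_const_lt (by simpa using hcon)
    obtain ⟨ε, ⟨⟨h1, h2⟩, h3⟩, h4⟩ :=
      ((((e1.and e2).and e3).filter_mono nhdsWithin_le_nhds).and
        (self_mem_nhdsWithin (s := Ioi (0:ℝ)))).exists
    exact ⟨ε, h4, h1, h2, h3⟩
  set U : E → ℝ := fun x => u x - 5 * ε + ε * ‖x‖ ^ 2 with hUdef
  set V : E → ℝ := fun x => v x - 5 * ε + ε * ‖x‖ ^ 2 with hVdef
  have hUu : ∀ x ∈ closure D₁, U x ≤ u x - ε := fun x hx => by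
    have := mul_le_mul_of_nonneg_left (hnsq hb₁ x hx) hε.le
    simp only [hUdef]; linarith
  have hVv : ∀ x ∈ closure D₂, V x ≤ v x - ε := fun x hx => by
    have := mul_le_mul_of_nonneg_left (hnsq hb₂ x hx) hε.le
    simp only [hVdef]; linarith
  have hcU : ContinuousOn U (closure D₁) := (hcu.sub continuousOn_const).add (by fun_prop)
  have hcV : ContinuousOn V (closure D₂) := (hcv.sub continuousOn_const).add (by fun_prop)
  set K₁ : Set E := closure D₁ ∩ U ⁻¹' Ici 0
  set K₂ : Set E := closure D₂ ∩ V ⁻¹' Ici 0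
  have hK₁ : IsCompact K₁ := (hcomp hb₁).of_isClosed_subset
    (hcU.preimage_isClosed_of_isClosed isClosed_closure isClosed_Ici) inter_subset_left
  have hK₂ : IsCompact K₂ := (hcomp hb₂).of_isClosed_subset
    (hcV.preimage_isClosed_of_isClosed isClosed_closure isClosed_Ici) inter_subset_left
  have hsepK : ∀ x ∈ K₁, ∀ y ∈ K₂, x ≠ y ∧ ((x ∈ D₁ ∧ y ∈ D₂) ∨ 1 / 3 ≤ ‖x - y‖) := by
    intro x hx y hy
    have h1 := hUu x hx.1
    have h2 := hVv y hy.1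
    have h3 : 0 ≤ U x := hx.2
    have h4 : 0 ≤ V y := hy.2
    exact hsep x hx.1 y hy.1 (by linarith) (by linarith)
  have hcZ : ContinuousOn (fun z : E × E => U z.1 * V z.2 / ‖z.1 - z.2‖ ^ 2) (K₁ ×ˢ K₂) := by
    refine ContinuousOn.div ?_ (by fun_prop) ?_
    · exact ((hcU.mono inter_subset_left).comp continuousOn_fst fun z hz => hz.1).mul
        ((hcV.mono inter_subset_left).comp continuousOn_snd fun z hz => hz.2)
    · rintro ⟨x, y⟩ ⟨hx, hy⟩
      have := sub_ne_zero.mpr (hsepK x hx y hy).1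
      simpa using this
  obtain ⟨⟨x, y⟩, ⟨hx, hy⟩, hmax⟩ := (hK₁.prod hK₂).exists_isMaxOn
    ⟨(p, q), ⟨hp, hUp.le⟩, ⟨hq, hVq.le⟩⟩ hcZ
  set M := U x * V y / ‖x - y‖ ^ 2 with hM
  have hpq : 0 < ‖p - q‖ ^ 2 := by
    have := sub_ne_zero.mpr (hsep p hp q hq hup hvq).1
    positivity
  have hM9 : 9 < M := by
    have h1 : U p * V q / ‖p - q‖ ^ 2 ≤ M := hmax (a := (p, q)) ⟨⟨hp, hUp.le⟩, ⟨hq, hVq.le⟩⟩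
    refine lt_of_lt_of_le ?_ h1
    rwa [lt_div_iff₀ hpq]
  obtain ⟨hxy, hcase⟩ := hsepK x hx y hy
  have hd : 0 < ‖x - y‖ ^ 2 := by
    have := sub_ne_zero.mpr hxy
    positivity
  have heq : U x * V y = M * ‖x - y‖ ^ 2 := by rw [hM, div_mul_cancel₀ _ hd.ne']
  have hUx0 : 0 ≤ U x := hx.2
  have hVy0 : 0 ≤ V y := hy.2
  have hprod : 0 < U x * V y := by rw [heq]; positivity
  have hUx : 0 < U x := pos_of_mul_pos_left hprod hVy0
  have hVy : 0 < V y := pos_of_mul_pos_right hprod hUx0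
  rcases hcase with ⟨hxD, hyD⟩ | hfar
  · have hux := hu.contDiffAt hD₁ hxD
    have hvy := hv.contDiffAt hD₂ hyD
    have hUC : ContDiffAt ℝ 2 U x := (hux.sub contDiffAt_const).add
        (contDiffAt_const.mul (contDiff_norm_sq ℝ).contDiffAt)
    have hVC : ContDiffAt ℝ 2 V y := (hvy.sub contDiffAt_const).add
        (contDiffAt_const.mul (contDiff_norm_sq ℝ).contDiffAt)
    have hn' : (0 : ℝ) < n := by exact_mod_cast hn
    refine two_point_max_principle hUC hVC hUx hVy hxy heq ?_ ?_ ?_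
    · have e1 : ∀ᶠ a in 𝓝 x, a ∈ D₁ ∧ 0 < U a :=
        (hD₁.eventually_mem hxD).and (hUC.continuousAt.eventually_const_lt hUx)
      have e2 : ∀ᶠ b in 𝓝 y, b ∈ D₂ ∧ 0 < V b :=
        (hD₂.eventually_mem hyD).and (hVC.continuousAt.eventually_const_lt hVy)
      rw [nhds_prod_eq]
      filter_upwards [e1.prod_mk e2] with z hz
      have hz1 : z.1 ∈ K₁ := ⟨subset_closure hz.1.1, hz.1.2.le⟩
      have hz2 : z.2 ∈ K₂ := ⟨subset_closure hz.2.1, hz.2.2.le⟩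
      have h1 : U z.1 * V z.2 / ‖z.1 - z.2‖ ^ 2 ≤ M := hmax (a := z) ⟨hz1, hz2⟩
      have h2 := sub_ne_zero.mpr (hsepK _ hz1 _ hz2).1
      rwa [div_le_iff₀ (by positivity)] at h1
    · rw [hUdef, lapl_add_normSq hux, hu.2 x hxD]; positivity
    · rw [hVdef, lapl_add_normSq hvy, hv.2 y hyD]; positivity
  · have h1 : U x ≤ 1 := by linarith [hUu x hx.1, hu1 x hx.1]
    have h2 : V y ≤ 1 := by linarith [hVv y hy.1, hv1 y hy.1]
    have h3 : U x * V y ≤ 1 := mul_le_one₀ h1 hVy0 h2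
    have h4 : (1/9 : ℝ) ≤ ‖x - y‖ ^ 2 := by nlinarith
    nlinarith

end

theorem stmt1 (n : ℕ) (hn : 3 ≤ n) :
    ∃ C : ℝ, 0 < C ∧
      ∀ (Ω₀ : Set (EuclideanSpace ℝ (Fin n))) (hp hm : EuclideanSpace ℝ (Fin n) → ℝ),
        IsOpen Ω₀ → Bornology.IsBounded Ω₀ →
        ball (0 : EuclideanSpace ℝ (Fin n)) (4/3) ⊆ Ω₀ →
        Ω₀ ⊆ ball (0 : EuclideanSpace ℝ (Fin n)) (5/3) →
        (∀ y ∈ ball (0 : EuclideanSpace ℝ (Fin n)) 1, ∀ x ∈ Ω₀, segment ℝ y x ⊆ Ω₀) →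
        ContinuousOn hp (closure (Ω₀ \ closedBall 0 1)) →
        IsHarmonicOn hp (Ω₀ \ closedBall 0 1) →
        (∀ x ∈ frontier Ω₀, hp x = 0) →
        (∀ x ∈ sphere (0 : EuclideanSpace ℝ (Fin n)) 1, hp x = 1) →
        ContinuousOn hm (closure (ball (0 : EuclideanSpace ℝ (Fin n)) 2 \ closure Ω₀)) →
        IsHarmonicOn hm (ball 0 2 \ closure Ω₀) →
        (∀ x ∈ frontier Ω₀, hm x = 0) →
        (∀ x ∈ sphere (0 : EuclideanSpace ℝ (Fin n)) 2, hm x = 1) →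
        ∀ x₀ ∈ frontier Ω₀, ∀ r : ℝ, 0 < r → r ≤ 1/6 →
          (hp (x₀ - r • (‖x₀‖⁻¹ • x₀)) / r) * (hm (x₀ + r • (‖x₀‖⁻¹ • x₀)) / r) ≤ C := by
  refine ⟨36, by norm_num, ?_⟩
  intro Ω hp hm hΩ _ hin hout hstar hpc hph hp0 hp1 hmc hmh hm0 hm1 x₀ hx₀ r hr hr6
  have hn0 : 0 < n := by omega
  set D₁ := Ω \ closedBall (0 : EuclideanSpace ℝ (Fin n)) 1 with hD₁def
  set D₂ := ball (0 : EuclideanSpace ℝ (Fin n)) 2 \ closure Ω with hD₂def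
  have hD₁ : IsOpen D₁ := hΩ.sdiff isClosed_closedBall
  have hD₂ : IsOpen D₂ := isOpen_ball.sdiff isClosed_closure
  have hb₁ : D₁ ⊆ ball 0 2 :=
    sdiff_subset.trans (hout.trans (ball_subset_ball (by norm_num)))
  have hb₂ : D₂ ⊆ ball 0 2 := sdiff_subset
  have hcl₁ : ∀ x ∈ closure D₁, x ∉ frontier Ω → x ∈ Ω ∧ 1 ≤ ‖x‖ := by
    intro x hx hxf
    have h1 : x ∈ closure Ω := closure_mono sdiff_subset hx
    refine ⟨?_, ?_⟩
    · by_contra h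
      exact hxf (by rw [hΩ.frontier_eq]; exact ⟨h1, h⟩)
    · have hsub : D₁ ⊆ {x | 1 ≤ ‖x‖} := fun y hy => by
        have := hy.2
        simp only [mem_closedBall, dist_zero_right, not_le] at this
        exact this.le
      exact closure_minimal hsub (isClosed_le continuous_const continuous_norm) hx
  have hcl₂ : ∀ x ∈ closure D₂, x ∉ frontier Ω → x ∉ closure Ω ∧ ‖x‖ ≤ 2 := by
    intro x hx hxf
    refine ⟨?_, ?_⟩
    · have h1 : x ∉ Ω := by
        have hsub : D₂ ⊆ Ωᶜ := fun y hy hyΩ => hy.2 (subset_closure hyΩ)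
        exact closure_minimal hsub hΩ.isClosed_compl hx
      intro h2
      exact hxf (by rw [hΩ.frontier_eq]; exact ⟨h2, h1⟩)
    · simpa using closure_ball_subset_closedBall (closure_mono hb₂ hx)
  have hb1 := bounds_of_frontier hn0 hD₁ hb₁ hpc hph (by
    intro x hx
    rw [hD₁.frontier_eq] at hx
    by_cases hxf : x ∈ frontier Ω
    · exact Or.inl (hp0 x hxf)
    · obtain ⟨h1, h2⟩ := hcl₁ x hx.1 hxf
      refine Or.inr (hp1 x ?_)
      have : ‖x‖ ≤ 1 := by
        by_contra h
        exact hx.2 ⟨h1, by simpa using h⟩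
      simpa using le_antisymm this h2)
  have hb2 := bounds_of_frontier hn0 hD₂ hb₂ hmc hmh (by
    intro x hx
    rw [hD₂.frontier_eq] at hx
    by_cases hxf : x ∈ frontier Ω
    · exact Or.inl (hm0 x hxf)
    · obtain ⟨h1, h2⟩ := hcl₂ x hx.1 hxf
      refine Or.inr (hm1 x ?_)
      have : 2 ≤ ‖x‖ := by
        by_contra h
        exact hx.2 ⟨by simpa using h, h1⟩
      simpa using le_antisymm h2 this)
  have key := mul_le_nine_mul_dist_sq hn0 hD₁ hD₂ hb₁ hb₂ hpc hmc hph hmh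
    (fun x hx => (hb1 x hx).2) (fun x hx => (hb2 x hx).2) (by
      intro x hx y hy hux hvy
      obtain ⟨hxΩ, hx1⟩ := hcl₁ x hx fun h => hux.ne' (hp0 x h)
      obtain ⟨hyΩ, hy2⟩ := hcl₂ y hy fun h => hvy.ne' (hm0 y h)
      refine ⟨fun h => hyΩ (subset_closure (h ▸ hxΩ)), ?_⟩
      have hx53 : ‖x‖ < 5 / 3 := by simpa using hout hxΩ
      have hy43 : 4 / 3 ≤ ‖y‖ := by
        by_contra h
        exact hyΩ (subset_closure (hin (by simpa using h)))
      have htri : ‖y‖ - ‖x‖ ≤ ‖x - y‖ := by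
        rw [norm_sub_rev]; exact norm_sub_norm_le y x
      by_cases h1 : ‖x‖ = 1
      · right; linarith
      by_cases h2 : ‖y‖ = 2
      · right; linarith
      left
      refine ⟨⟨hxΩ, ?_⟩, ?_, hyΩ⟩
      · simpa using lt_of_le_of_ne hx1 (Ne.symm h1)
      · simpa using lt_of_le_of_ne hy2 h2)
  have hx₀Ω : x₀ ∉ Ω := by rw [hΩ.frontier_eq] at hx₀; exact hx₀.2
  have hx₀c : x₀ ∈ closure Ω := frontier_subset_closure hx₀
  have hN1 : 4 / 3 ≤ ‖x₀‖ := by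
    by_contra h
    exact hx₀Ω (hin (by simpa using h))
  have hN2 : ‖x₀‖ ≤ 5 / 3 := by
    simpa using closure_ball_subset_closedBall (closure_mono hout hx₀c)
  have hNpos : 0 < ‖x₀‖ := by linarith
  set N := ‖x₀‖ with hN
  have hpe : x₀ - r • (N⁻¹ • x₀) = (1 - r / N) • x₀ := by
    rw [sub_smul, one_smul, smul_smul, div_eq_mul_inv]
  have hqe : x₀ + r • (N⁻¹ • x₀) = (1 + r / N) • x₀ := by
    rw [add_smul, one_smul, smul_smul, div_eq_mul_inv]
  have hrN0 : 0 < r / N := by positivity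
  have hrN1 : r / N < 1 := by rw [div_lt_one hNpos]; linarith
  have hrNN : r / N * N = r := by field_simp
  have hpcl : (1 - r / N) • x₀ ∈ closure D₁ := by
    have hcont : Continuous fun x : EuclideanSpace ℝ (Fin n) => (1 - r / N) • x := by fun_prop
    have hev : ∃ᶠ x in 𝓝 x₀, x ∈ Ω := mem_closure_iff_frequently.mp hx₀c
    have hnorm : ∀ᶠ x in 𝓝 x₀, 1 < ‖(1 - r / N) • x‖ := by
      refine hcont.norm.continuousAt.eventually_const_lt ?_
      beta_reduce
      rw [norm_smul, Real.norm_eq_abs, abs_of_pos (by linarith), ← hN]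
      nlinarith
    rw [mem_closure_iff_frequently]
    refine (hcont.tendsto x₀).frequently ((hev.and_eventually hnorm).mono ?_)
    rintro x ⟨hxΩ, hx1⟩
    refine ⟨hstar 0 (by simp) x hxΩ ?_, by simpa using hx1⟩
    exact ⟨r / N, 1 - r / N, hrN0.le, by linarith, by ring, by simp⟩
  have hqD : (1 + r / N) • x₀ ∈ D₂ := by
    refine ⟨?_, ?_⟩
    · rw [mem_ball_zero_iff, norm_smul, Real.norm_eq_abs, abs_of_pos (by linarith), ← hN]
      nlinarith
    · intro hcl
      set τ : ℝ := (1 + r / N)⁻¹ with hτ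
      have hτ0 : 0 < τ := by positivity
      have hτ1 : τ < 1 := inv_lt_one_of_one_lt₀ (by linarith)
      have hτ1' : 0 < 1 - τ := by linarith
      -- `x₀` is a convex combination of `w` and a point that tends to `0` as `w → (1 + r/N) x₀`
      have hcont : Continuous fun w : EuclideanSpace ℝ (Fin n) =>
        (1 - τ)⁻¹ • (x₀ - τ • w) := by fun_prop
      have hev : ∀ᶠ w in 𝓝 ((1 + r / N) • x₀), ‖(1 - τ)⁻¹ • (x₀ - τ • w)‖ < 1 := by
        refine hcont.norm.continuousAt.eventually_lt_const ?_
        have : τ • (1 + r / N) • x₀ = x₀ := by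
          rw [smul_smul, hτ, inv_mul_cancel₀ (by positivity), one_smul]
        beta_reduce
        rw [this]; simp
      obtain ⟨w, hwΩ, hw⟩ := ((mem_closure_iff_frequently.mp hcl).and_eventually hev).exists
      refine hx₀Ω (hstar _ (by simpa using hw) w hwΩ ⟨1 - τ, τ, hτ1'.le, hτ0.le, by ring, ?_⟩)
      rw [smul_smul, mul_inv_cancel₀ hτ1'.ne', one_smul, sub_add_cancel]
  rw [hpe, hqe, div_mul_div_comm, div_le_iff₀ (by positivity)]
  have hqcl := subset_closure hqD
  have hdist : ‖(1 - r / N) • x₀ - (1 + r / N) • x₀‖ ^ 2 = 4 * r ^ 2 := by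
    rw [← sub_smul, norm_smul, mul_pow, Real.norm_eq_abs, sq_abs, ← hN]
    field_simp
    ring
  rcases (hb1 _ hpcl).1.eq_or_lt with h | h
  · rw [← h]; nlinarith
  rcases (hb2 _ hqcl).1.eq_or_lt with h' | h'
  · rw [← h']; nlinarith
  have := key _ hpcl _ hqcl h h'
  rw [hdist] at this
  linarith
end

section
/- Let ρ > 0, A > 0 and c ∈ ℝⁿ. Suppose h is continuous on cl(B_{2ρ}(c)), satisfies 0 ≤ h ≤ A, vanishes identically on cl(B_ρ(c)), and is harmonic on the open set {h > 0} ∩ B_{2ρ}(c). Then there is a constant Cₙ depending only on n such that h(x) ≤ Cₙ · A · (|x − c| − ρ)/ρ for all x with ρ ≤ |x − c| ≤ 3ρ/2. In particular h grows at most linearly, at rate Cₙ A/ρ, away from the sphere ∂B_ρ(c). -/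
/-!
Comparison with a strictly superharmonic radial barrier. With `k = n + 1` and
`g y = exp (k * (1 - |y - c|² / ρ²))`, the function `2 * A * (1 - g)` is nonnegative on the annulus
`ρ ≤ |y - c| ≤ 2ρ`, is at least `A` on the outer sphere, and is strictly superharmonic on the
annulus (`gauss_lapl`). If `h` exceeded the barrier somewhere, the maximum of the
difference over the compact annulus would be attained off both spheres, at a point where `h > 0`
and hence `h` is harmonic; the Laplacian of the difference would be positive there, contradicting
the second-derivative test `second_deriv_nonpos_of_isLocalMax`. The linear bound then follows from
`1 - exp (-t) ≤ t`.
-/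

open Metric Set

/-- Second-derivative test: at an interior maximum all pure second derivatives are nonpositive. -/
lemma second_deriv_nonpos_of_isLocalMax_s4 {E : Type*} [NormedAddCommGroup E] [NormedSpace ℝ E]
    {f : E → ℝ} {x : E} (hf : ContDiffAt ℝ 2 f x) (hmax : IsLocalMax f x) (v : E) :
    fderiv ℝ (fun y => fderiv ℝ f y v) x v ≤ 0 := by
  by_contra! hpos
  have hline : ∀ t : ℝ, HasDerivAt (fun t : ℝ => x + t • v) v t := fun t => by
    simpa using ((hasDerivAt_id t).smul_const v).const_add x
  have htend : Filter.Tendsto (fun t : ℝ => x + t • v) (nhds 0) (nhds x) := by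
    simpa using (hline 0).continuousAt.tendsto
  have hdiff : ∀ᶠ y in nhds x, DifferentiableAt ℝ f y :=
    (hf.eventually (by simp)).mono fun y hy => hy.differentiableAt (by simp)
  have hd1 : deriv (fun t : ℝ => f (x + t • v)) =ᶠ[nhds 0]
      fun t => fderiv ℝ f (x + t • v) v := by
    filter_upwards [htend.eventually hdiff] with t ht
    exact (ht.hasFDerivAt.comp_hasDerivAt t (hline t)).deriv
  have hD : DifferentiableAt ℝ (fun y => fderiv ℝ f y v) x :=
    ((hf.fderiv_right (m := 1) (by norm_num)).differentiableAt (by simp)).clm_apply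
      (differentiableAt_const v)
  have hd2 : deriv (deriv fun t : ℝ => f (x + t • v)) 0
      = fderiv ℝ (fun y => fderiv ℝ f y v) x v := by
    rw [hd1.deriv_eq]
    have hD' : HasFDerivAt (fun y => fderiv ℝ f y v) (fderiv ℝ (fun y => fderiv ℝ f y v) x)
        (x + (0 : ℝ) • v) := by simpa using hD.hasFDerivAt
    exact (hD'.comp_hasDerivAt (0 : ℝ) (hline 0)).deriv
  have hmax0 : IsLocalMax (fun t : ℝ => f (x + t • v)) 0 := by
    filter_upwards [htend.eventually hmax] with t ht
    simpa using ht
  have hcont : ContinuousAt (fun t : ℝ => f (x + t • v)) 0 :=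
    ContinuousAt.comp (f := fun t : ℝ => x + t • v) (g := f)
      (by simpa using hf.continuousAt) (hline 0).continuousAt
  have hmin0 := isLocalMin_of_deriv_deriv_pos (hd2 ▸ hpos) hmax0.deriv_eq_zero hcont
  -- Being both a local minimum and a local maximum, `0` has a neighbourhood of constancy.
  have hconst : (fun t : ℝ => f (x + t • v)) =ᶠ[nhds 0] fun _ => f (x + (0 : ℝ) • v) := by
    filter_upwards [hmax0, hmin0] with t h1 h2
    exact le_antisymm h1 h2
  have hzero : deriv (deriv fun t : ℝ => f (x + t • v)) 0 = 0 := by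
    rw [hconst.deriv.deriv_eq]
    simp
  rw [hd2] at hzero
  exact hpos.ne' hzero

section Gaussian

variable {n : ℕ} (c : EuclideanSpace ℝ (Fin n)) (k a : ℝ)

lemma gauss_contDiff : ContDiff ℝ 2
    (fun y : EuclideanSpace ℝ (Fin n) => Real.exp (k - a * ‖y - c‖ ^ 2)) :=
  (contDiff_const.sub (contDiff_const.mul ((contDiff_id.sub contDiff_const).norm_sq ℝ))).exp

lemma gauss_hasFDerivAt (y : EuclideanSpace ℝ (Fin n)) : HasFDerivAt
    (fun y : EuclideanSpace ℝ (Fin n) => Real.exp (k - a * ‖y - c‖ ^ 2))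
    (Real.exp (k - a * ‖y - c‖ ^ 2) • -(a • (2 : ℝ) • innerSL ℝ (y - c))) y := by
  have h1 : HasFDerivAt (fun y : EuclideanSpace ℝ (Fin n) => ‖y - c‖ ^ 2)
      ((2 : ℝ) • innerSL ℝ (y - c)) y := by
    simpa [two_smul] using ((hasFDerivAt_id y).sub_const c).norm_sq
  exact ((h1.const_mul a).const_sub k).exp

lemma gauss_second (v x : EuclideanSpace ℝ (Fin n)) :
    fderiv ℝ (fun y => fderiv ℝ
      (fun y : EuclideanSpace ℝ (Fin n) => Real.exp (k - a * ‖y - c‖ ^ 2)) y v) x v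
      = Real.exp (k - a * ‖x - c‖ ^ 2)
        * (4 * a ^ 2 * (inner ℝ (x - c) v) ^ 2 - 2 * a * ‖v‖ ^ 2) := by
  have h0 : (fun y => fderiv ℝ
      (fun y : EuclideanSpace ℝ (Fin n) => Real.exp (k - a * ‖y - c‖ ^ 2)) y v)
      = fun y => Real.exp (k - a * ‖y - c‖ ^ 2) * (-2 * a * innerSL ℝ v (y - c)) := by
    funext y
    rw [(gauss_hasFDerivAt c k a y).fderiv]
    simp [real_inner_comm v, inner_sub_right]
    ring
  have h1 : HasFDerivAt (fun y : EuclideanSpace ℝ (Fin n) => -2 * a * innerSL ℝ v (y - c))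
      ((-2 * a) • innerSL ℝ v) x := by
    have := ((innerSL ℝ v).hasFDerivAt.comp x ((hasFDerivAt_id x).sub_const c)).const_mul (-2 * a)
    simpa using this
  rw [h0, ((gauss_hasFDerivAt c k a x).fun_mul h1).fderiv]
  simp [real_inner_comm v, inner_sub_right]
  ring

lemma gauss_lapl (x : EuclideanSpace ℝ (Fin n)) :
    lapl (fun y : EuclideanSpace ℝ (Fin n) => Real.exp (k - a * ‖y - c‖ ^ 2)) x
      = Real.exp (k - a * ‖x - c‖ ^ 2) * (4 * a ^ 2 * ‖x - c‖ ^ 2 - 2 * a * n) := by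
  unfold lapl
  simp only [gauss_second]
  rw [← Finset.mul_sum, Finset.sum_sub_distrib, ← Finset.mul_sum, EuclideanSpace.norm_sq_eq (x - c)]
  congr 2
  · simp [EuclideanSpace.inner_single_right]
  · simp
    ring

end Gaussian

lemma lapl_add_const_mul {n : ℕ} {f g : EuclideanSpace ℝ (Fin n) → ℝ}
    {x : EuclideanSpace ℝ (Fin n)} (hf : ContDiffAt ℝ 2 f x) (hg : ContDiffAt ℝ 2 g x) (b : ℝ) :
    lapl (fun y => f y + b * g y) x = lapl f x + b * lapl g x := by
  unfold lapl
  rw [Finset.mul_sum, ← Finset.sum_add_distrib]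
  refine Finset.sum_congr rfl fun i _ => ?_
  have hD : ∀ {f : EuclideanSpace ℝ (Fin n) → ℝ}, ContDiffAt ℝ 2 f x →
      DifferentiableAt ℝ (fun y => fderiv ℝ f y (EuclideanSpace.single i (1:ℝ))) x := fun hf =>
    ((hf.fderiv_right (m := 1) (by norm_num)).differentiableAt (by simp)).clm_apply
      (differentiableAt_const _)
  have hev : (fun y => fderiv ℝ (fun y => f y + b * g y) y (EuclideanSpace.single i (1:ℝ)))
      =ᶠ[nhds x] fun y => fderiv ℝ f y (EuclideanSpace.single i (1:ℝ))
        + b * fderiv ℝ g y (EuclideanSpace.single i (1:ℝ)) := by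
    filter_upwards [hf.eventually (by simp), hg.eventually (by simp)] with y h1 h2
    have e1 := (h1.differentiableAt (by simp)).hasFDerivAt
    have e2 := (h2.differentiableAt (by simp)).hasFDerivAt
    rw [(e1.fun_add (e2.const_mul b)).fderiv]
    simp
  rw [hev.fderiv_eq, ((hD hf).hasFDerivAt.fun_add ((hD hg).hasFDerivAt.const_mul b)).fderiv]
  simp

theorem stmt4 (n : ℕ) :
    ∃ C : ℝ, 0 < C ∧
      ∀ (ρ A : ℝ) (c : EuclideanSpace ℝ (Fin n)) (h : EuclideanSpace ℝ (Fin n) → ℝ),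
        0 < ρ → 0 < A →
        ContinuousOn h (closedBall c (2*ρ)) →
        (∀ x ∈ closedBall c (2*ρ), 0 ≤ h x ∧ h x ≤ A) →
        (∀ x ∈ closedBall c ρ, h x = 0) →
        IsHarmonicOn h ({x | 0 < h x} ∩ ball c (2*ρ)) →
        ∀ x : EuclideanSpace ℝ (Fin n), ρ ≤ dist x c → dist x c ≤ 3*ρ/2 →
          h x ≤ C * A * (dist x c - ρ) / ρ := by
  refine ⟨5 * (n + 1), by positivity, ?_⟩
  intro ρ A c h hρ hA hcont hbd hzero hharm
  set k : ℝ := n + 1 with hk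
  have hk1 : 1 ≤ k := by simp [hk]
  set a : ℝ := k / ρ ^ 2 with ha
  have ha0 : 0 < a := by positivity
  have haρ : a * ρ ^ 2 = k := by rw [ha]; field_simp
  let g : EuclideanSpace ℝ (Fin n) → ℝ := fun y => Real.exp (k - a * ‖y - c‖ ^ 2)
  have hg : ContDiff ℝ 2 g := gauss_contDiff c k a
  -- Comparison with the barrier `2 * A * (1 - g)` on the closed annulus.
  have key : ∀ x ∈ closedBall c (2 * ρ) \ ball c ρ, h x + 2 * A * g x ≤ 2 * A := by
    have hcomp : IsCompact (closedBall c (2 * ρ) \ ball c ρ) :=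
      (isCompact_closedBall c (2 * ρ)).diff isOpen_ball
    have hfc : ContinuousOn (fun y => h y + 2 * A * g y) (closedBall c (2 * ρ) \ ball c ρ) :=
      (hcont.mono sdiff_subset).add (continuous_const.mul hg.continuous).continuousOn
    intro x hx
    obtain ⟨z, hz, hzmax⟩ := hcomp.exists_isMaxOn ⟨x, hx⟩ hfc
    refine (hzmax hx).trans ?_
    by_contra! hlt
    have hz1 : ‖z - c‖ ≤ 2 * ρ := by simpa [dist_eq_norm] using hz.1
    have hz2 : ρ ≤ ‖z - c‖ := by simpa [dist_eq_norm] using hz.2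
    have hsq : k ≤ a * ‖z - c‖ ^ 2 := by rw [← haρ]; gcongr
    have hg1 : g z ≤ 1 := Real.exp_le_one_iff.2 (by linarith)
    have hhz : 0 < h z := by nlinarith
    have hzin : ρ < ‖z - c‖ := by
      by_contra! hle
      have := hzero z (by simpa [dist_eq_norm] using hle)
      linarith
    have hzout : ‖z - c‖ < 2 * ρ := by
      by_contra! hle
      have heq : ‖z - c‖ = 2 * ρ := le_antisymm hz1 hle
      have h3 : k - a * ‖z - c‖ ^ 2 = -(3 * k) := by rw [heq]; linear_combination (-4) * haρ
      have hhalf : g z ≤ 1 / 2 := by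
        change Real.exp (k - a * ‖z - c‖ ^ 2) ≤ 1 / 2
        rw [h3, Real.exp_neg, one_div]
        have := Real.add_one_le_exp (3 * k)
        gcongr
        linarith
      have := (hbd z hz.1).2
      nlinarith
    have hzball : ball c (2 * ρ) ∈ nhds z :=
      isOpen_ball.mem_nhds (by simpa [dist_eq_norm] using hzout)
    have hhc : ContinuousAt h z :=
      hcont.continuousAt (Filter.mem_of_superset hzball ball_subset_closedBall)
    have hU : {x | 0 < h x} ∩ ball c (2 * ρ) ∈ nhds z :=
      Filter.inter_mem (hhc.eventually (lt_mem_nhds hhz)) hzball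
    have hh2 : ContDiffAt ℝ 2 h z := hharm.1.contDiffAt hU
    have hmax : IsLocalMax (fun y => h y + 2 * A * g y) z := by
      refine hzmax.isLocalMax ?_
      have hout : (closedBall c ρ)ᶜ ∈ nhds z :=
        isClosed_closedBall.isOpen_compl.mem_nhds (by simpa [dist_eq_norm] using hzin)
      filter_upwards [hzball, hout] with y h1 h2
      exact ⟨ball_subset_closedBall h1, fun h3 => h2 (ball_subset_closedBall h3)⟩
    have hle : lapl (fun y => h y + 2 * A * g y) z ≤ 0 :=
      Finset.sum_nonpos fun i _ => second_deriv_nonpos_of_isLocalMax_s4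
        (hh2.add (contDiffAt_const.mul hg.contDiffAt)) hmax _
    rw [lapl_add_const_mul hh2 hg.contDiffAt, hharm.2 z (mem_of_mem_nhds hU),
      gauss_lapl c k a z] at hle
    have hpos : 0 < 4 * a ^ 2 * ‖z - c‖ ^ 2 - 2 * a * n := by
      have hn : (n : ℝ) = k - 1 := by simp [hk]
      rw [hn]
      nlinarith [mul_le_mul_of_nonneg_left hsq ha0.le]
    have : 0 < 2 * A * (Real.exp (k - a * ‖z - c‖ ^ 2)
        * (4 * a ^ 2 * ‖z - c‖ ^ 2 - 2 * a * n)) := by positivity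
    linarith
  intro x hx1 hx2
  have hkey := key x ⟨by simp only [mem_closedBall]; linarith, by simpa using hx1⟩
  rw [dist_eq_norm] at *
  have hexp : k - a * ‖x - c‖ ^ 2 + 1 ≤ g x := Real.add_one_le_exp _
  have hlin : a * ‖x - c‖ ^ 2 - k ≤ 5 / 2 * k * (‖x - c‖ - ρ) / ρ := by
    rw [ha, le_div_iff₀ hρ]
    have : (k / ρ ^ 2 * ‖x - c‖ ^ 2 - k) * ρ
        = k * ((‖x - c‖ - ρ) * (‖x - c‖ + ρ)) / ρ := by field_simp; ring
    rw [this, div_le_iff₀ hρ]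
    nlinarith [mul_nonneg (mul_nonneg (by linarith : (0:ℝ) ≤ k) (sub_nonneg.2 hx1))
      (by linarith : 0 ≤ 5 / 2 * ρ - (‖x - c‖ + ρ))]
  calc h x ≤ 2 * A * (a * ‖x - c‖ ^ 2 - k) := by nlinarith
    _ ≤ 2 * A * (5 / 2 * k * (‖x - c‖ - ρ) / ρ) := by gcongr
    _ = 5 * k * A * (‖x - c‖ - ρ) / ρ := by ring
end

section
/- Let U ⊆ ℝⁿ be open and let h : U → ℝ be continuous with h ≥ 0 on U and h harmonic on the open set {h > 0}. Then h is subharmonic on U in the mean-value sense: for every x ∈ U and s > 0 with cl(B_s(x)) ⊆ U, h(x) ≤ (average of h over the ball B_s(x)). -/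
/-!
Composing `h` with a smooth convex function `ψ` that vanishes on `(-∞, ε]` and is within `2 ε` of the
identity on `[0, ∞)` gives a function that is `C²` on `U`: it vanishes identically near the zeros
of `h`, and on `{h > 0}` it satisfies `Δ(ψ ∘ h) = ψ''(h) |∇h|² + ψ'(h) Δh ≥ 0`
(`lapl_comp_nonneg`). Since `ψ(h) ≤ h` and `ψ(h(x)) ≥ h(x) - 2 ε`, it suffices to prove the
mean-value inequality for `C²` functions with nonnegative Laplacian on the closed ball; after
multiplication by a bump function these are globally `C²` with compact support.

For such a `g`, let `w` be a continuous radial weight approximating the indicator function of the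
ball of radius `s` from below, and let `V ≥ 0` be the function supported in the closed ball with
`∇V(y) = -w(y) y`. Integration by parts gives
`d/dr ∫ w(y) g(x + r y) dy = ∫ w(y) ∇g(x + r y) · y dy = r ∫ V(y) Δg(x + r y) dy ≥ 0`
for `0 < r < 1` (`integral_radialWeight_fderiv`), and comparing `r = 0` with `r = 1` yields
`g(x) ∫ w ≤ ∫ w(y) g(x + y) dy` (`mul_integral_radialWeight_le`). Using the weight `w` instead of
the indicator function makes `V` a `C¹` function on the whole space, so no surface integrals occur.
Both `ψ` and `V` are built from one primitive of the smooth step function, `smoothPosPart`.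
-/

open Metric Set MeasureTheory

open Filter Topology

/-! ### A smooth convex substitute for the positive part -/

/-- The primitive `t ↦ ∫₀ᵗ S` of Mathlib's smooth step `S = Real.smoothTransition`: a smooth convex
function that vanishes for `t ≤ 0` and lies between `t - 1` and `t` for `t ≥ 0`. -/
noncomputable def smoothPosPart (t : ℝ) : ℝ := ∫ u in (0 : ℝ)..t, Real.smoothTransition u

lemma smoothPosPart_hasDerivAt (t : ℝ) :
    HasDerivAt smoothPosPart (Real.smoothTransition t) t :=
  intervalIntegral.integral_hasDerivAt_right
    (Real.smoothTransition.continuous.intervalIntegrable _ _)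
    Real.smoothTransition.continuous.stronglyMeasurable.stronglyMeasurableAtFilter
    Real.smoothTransition.continuous.continuousAt

lemma smoothPosPart_deriv : deriv smoothPosPart = Real.smoothTransition :=
  funext fun t => (smoothPosPart_hasDerivAt t).deriv

lemma smoothPosPart_contDiff : ContDiff ℝ 2 smoothPosPart := by
  rw [show (2 : WithTop ℕ∞) = 1 + 1 by norm_num, contDiff_succ_iff_deriv]
  refine ⟨fun t => (smoothPosPart_hasDerivAt t).differentiableAt, by simp, ?_⟩
  rw [smoothPosPart_deriv]
  exact Real.smoothTransition.contDiff (n := 1)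

lemma smoothPosPart_of_nonpos {t : ℝ} (ht : t ≤ 0) : smoothPosPart t = 0 := by
  rw [smoothPosPart, intervalIntegral.integral_congr (g := fun _ => (0 : ℝ))]
  · simp
  · intro u hu
    rw [uIcc_of_ge ht] at hu
    exact Real.smoothTransition.zero_of_nonpos hu.2

lemma smoothPosPart_monotone : Monotone smoothPosPart :=
  monotone_of_deriv_nonneg (fun t => (smoothPosPart_hasDerivAt t).differentiableAt)
    fun t => by rw [smoothPosPart_deriv]; exact Real.smoothTransition.nonneg t

lemma smoothPosPart_nonneg (t : ℝ) : 0 ≤ smoothPosPart t := by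
  rcases le_total t 0 with ht | ht
  · exact (smoothPosPart_of_nonpos ht).ge
  · exact (smoothPosPart_of_nonpos le_rfl).ge.trans (smoothPosPart_monotone ht)

lemma sub_one_le_smoothPosPart (t : ℝ) : t - 1 ≤ smoothPosPart t := by
  rcases le_total t 1 with ht | ht
  · linarith [smoothPosPart_nonneg t]
  · have h1 : smoothPosPart t - smoothPosPart 1 = ∫ u in (1 : ℝ)..t, Real.smoothTransition u :=
      intervalIntegral.integral_interval_sub_left
        (Real.smoothTransition.continuous.intervalIntegrable _ _)
        (Real.smoothTransition.continuous.intervalIntegrable _ _)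
    rw [intervalIntegral.integral_congr (g := fun _ => (1 : ℝ))] at h1
    · simp at h1
      linarith [smoothPosPart_nonneg 1]
    · intro u hu
      rw [uIcc_of_le ht] at hu
      exact Real.smoothTransition.one_of_one_le hu.1

lemma smoothPosPart_le {t : ℝ} (ht : 0 ≤ t) : smoothPosPart t ≤ t := by
  calc smoothPosPart t ≤ ∫ _ in (0 : ℝ)..t, (1 : ℝ) :=
        intervalIntegral.integral_mono_on ht
          (Real.smoothTransition.continuous.intervalIntegrable _ _)
          (by simp) fun u _ => Real.smoothTransition.le_one u
    _ = t := by simp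

/-! ### Radial weights and their potentials -/

/-- The radial weight `y ↦ S(c (s² - ‖y‖²))`, a continuous approximation from below (as `c → ∞`)
of the indicator function of the ball of radius `s` about the origin. -/
noncomputable def radialWeight (n : ℕ) (c s : ℝ) (y : EuclideanSpace ℝ (Fin n)) : ℝ :=
  Real.smoothTransition (c * (s ^ 2 - ‖y‖ ^ 2))

/-- A nonnegative function supported in the closed ball of radius `s` whose gradient at `y` is
`-radialWeight n c s y • y`. -/
noncomputable def radialPotential (n : ℕ) (c s : ℝ) (y : EuclideanSpace ℝ (Fin n)) : ℝ :=
  (2 * c)⁻¹ * smoothPosPart (c * (s ^ 2 - ‖y‖ ^ 2))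

section radial

variable {n : ℕ} {c s : ℝ}

lemma radialWeight_continuous : Continuous (radialWeight n c s) :=
  Real.smoothTransition.continuous.comp (by fun_prop)

lemma radialWeight_nonneg (y : EuclideanSpace ℝ (Fin n)) : 0 ≤ radialWeight n c s y :=
  Real.smoothTransition.nonneg _

lemma radialWeight_le_one (y : EuclideanSpace ℝ (Fin n)) : radialWeight n c s y ≤ 1 :=
  Real.smoothTransition.le_one _

lemma radial_arg_nonpos (hc : 0 < c) (hs : 0 < s) {y : EuclideanSpace ℝ (Fin n)}
    (hy : s ≤ ‖y‖) : c * (s ^ 2 - ‖y‖ ^ 2) ≤ 0 := by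
  have : s ^ 2 ≤ ‖y‖ ^ 2 := by gcongr
  exact mul_nonpos_of_nonneg_of_nonpos hc.le (by linarith)

lemma radialWeight_eq_zero (hc : 0 < c) (hs : 0 < s) {y : EuclideanSpace ℝ (Fin n)}
    (hy : s ≤ ‖y‖) : radialWeight n c s y = 0 :=
  Real.smoothTransition.zero_of_nonpos (radial_arg_nonpos hc hs hy)

lemma radialPotential_eq_zero (hc : 0 < c) (hs : 0 < s) {y : EuclideanSpace ℝ (Fin n)}
    (hy : s ≤ ‖y‖) : radialPotential n c s y = 0 := by
  rw [radialPotential, smoothPosPart_of_nonpos (radial_arg_nonpos hc hs hy), mul_zero]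

lemma radialWeight_hasCompactSupport (hc : 0 < c) (hs : 0 < s) :
    HasCompactSupport (radialWeight n c s) :=
  HasCompactSupport.intro (isCompact_closedBall (0 : EuclideanSpace ℝ (Fin n)) s) fun y hy =>
    radialWeight_eq_zero hc hs (by simpa using (not_le.1 fun h => hy (by simpa using h)).le)

lemma radialPotential_hasCompactSupport (hc : 0 < c) (hs : 0 < s) :
    HasCompactSupport (radialPotential n c s) :=
  HasCompactSupport.intro (isCompact_closedBall (0 : EuclideanSpace ℝ (Fin n)) s) fun y hy =>
    radialPotential_eq_zero hc hs (by simpa using (not_le.1 fun h => hy (by simpa using h)).le)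

lemma radialPotential_nonneg (hc : 0 < c) (y : EuclideanSpace ℝ (Fin n)) :
    0 ≤ radialPotential n c s y :=
  mul_nonneg (by positivity) (smoothPosPart_nonneg _)

lemma radialPotential_hasFDerivAt (hc : 0 < c) (y : EuclideanSpace ℝ (Fin n)) :
    HasFDerivAt (radialPotential n c s) (-(radialWeight n c s y) • innerSL ℝ y) y := by
  have h1 : HasFDerivAt (fun y : EuclideanSpace ℝ (Fin n) => c * (s ^ 2 - ‖y‖ ^ 2))
      (c • (-((2 : ℕ) • (innerSL ℝ y : EuclideanSpace ℝ (Fin n) →L[ℝ] ℝ)))) y :=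
    ((hasStrictFDerivAt_norm_sq y).hasFDerivAt.const_sub (s ^ 2)).const_mul c
  have h2 := ((smoothPosPart_hasDerivAt _).comp_hasFDerivAt y h1).const_mul ((2 * c)⁻¹)
  refine h2.congr_fderiv ?_
  ext v
  simp [radialWeight]
  field_simp

end radial

/-! ### The mean-value inequality for `C²` subharmonic functions -/

/-- Integration by parts against the radial potential. Writing `w` for the weight and `V` for the
potential, `∇V = -w y` gives `∫ w(y) ∇g(x + r y) · y = r ∫ V(y) Δg(x + r y)`. -/
lemma integral_radialWeight_fderiv {n : ℕ} {g : EuclideanSpace ℝ (Fin n) → ℝ}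
    (hg : ContDiff ℝ 2 g) (x : EuclideanSpace ℝ (Fin n)) {c s : ℝ} (hc : 0 < c) (hs : 0 < s)
    (r : ℝ) :
    ∫ y, radialWeight n c s y * fderiv ℝ g (x + r • y) y =
      r * ∫ y, radialPotential n c s y * lapl g (x + r • y) := by
  let e : Fin n → EuclideanSpace ℝ (Fin n) := fun i => EuclideanSpace.single i (1 : ℝ)
  let D : Fin n → EuclideanSpace ℝ (Fin n) → ℝ := fun i z => fderiv ℝ g z (e i)
  have hg1 : ContDiff ℝ 1 (fderiv ℝ g) := hg.fderiv_right (by norm_num)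
  have hD : ∀ i, ContDiff ℝ 1 (D i) := fun i => hg1.clm_apply contDiff_const
  have hDc : ∀ i, Continuous (D i) := fun i => (hD i).continuous
  have hDd : ∀ i, Continuous fun z => fderiv ℝ (D i) z (e i) := fun i =>
    ((hD i).continuous_fderiv (by norm_num)).clm_apply continuous_const
  have hV := radialPotential_hasFDerivAt (n := n) (s := s) hc
  have hVc : Continuous (radialPotential n c s) :=
    continuous_iff_continuousAt.2 fun y => (hV y).continuousAt
  have hVs := radialPotential_hasCompactSupport (n := n) hc hs
  have hwc : Continuous (radialWeight n c s) := radialWeight_continuous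
  have hws := radialWeight_hasCompactSupport (n := n) hc hs
  have haff : ∀ i y, HasFDerivAt (fun y => D i (x + r • y)) (r • fderiv ℝ (D i) (x + r • y)) y := by
    intro i y
    have h1 : HasFDerivAt (fun y : EuclideanSpace ℝ (Fin n) => x + r • y)
        (r • ContinuousLinearMap.id ℝ _) y := ((hasFDerivAt_id y).const_smul r).const_add x
    have h2 := (((hD i).differentiable (by norm_num)) (x + r • y)).hasFDerivAt.comp y h1
    refine h2.congr_fderiv ?_
    ext v; simp
  have hyi : ∀ i, Continuous fun y : EuclideanSpace ℝ (Fin n) => y i := fun i => by fun_prop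
  have hparts : ∀ i, ∫ y, radialWeight n c s y * (y i * D i (x + r • y)) =
      r * ∫ y, radialPotential n c s y * fderiv ℝ (D i) (x + r • y) (e i) := by
    intro i
    have key := integral_bilinear_hasFDerivAt_right_eq_neg_left_of_integrable
      (μ := (volume : Measure (EuclideanSpace ℝ (Fin n))))
      (f := radialPotential n c s) (f' := fun y => -(radialWeight n c s y) • innerSL ℝ y)
      (g := fun y => D i (x + r • y)) (g' := fun y => r • fderiv ℝ (D i) (x + r • y))
      (v := e i) (B := ContinuousLinearMap.mul ℝ ℝ) ?_ ?_ ?_ (fun y _ => hV y)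
      (fun y _ => haff i y)
    · rw [← integral_const_mul]
      simp only [ContinuousLinearMap.mul_apply', smul_apply, smul_eq_mul,
        innerSL_apply_apply, e, EuclideanSpace.inner_single_right] at key ⊢
      rw [← integral_neg] at key
      calc _ = _ := ?_
        _ = _ := key.symm
        _ = _ := ?_
      · congr 1; ext y; simp; ring
      · congr 1; ext y; ring
    · refine Continuous.integrable_of_hasCompactSupport ?_ ?_
      · simp only [ContinuousLinearMap.mul_apply', smul_apply, smul_eq_mul,
          innerSL_apply_apply]
        have := hDc i
        fun_prop
      · refine hws.mono' fun y hy => subset_tsupport _ fun h0 => hy ?_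
        simp [h0]
    · refine Continuous.integrable_of_hasCompactSupport ?_ ?_
      · simp only [ContinuousLinearMap.mul_apply', smul_apply, smul_eq_mul]
        exact hVc.mul (continuous_const.mul ((hDd i).comp (by fun_prop)))
      · exact hVs.mul_right
    · refine Continuous.integrable_of_hasCompactSupport ?_ ?_
      · exact hVc.mul ((hDc i).comp (by fun_prop))
      · exact hVs.mul_right
  have hsum : ∀ y : EuclideanSpace ℝ (Fin n), ∀ L : EuclideanSpace ℝ (Fin n) →L[ℝ] ℝ,
      L y = ∑ i, y i * L (e i) := by
    intro y L
    conv_lhs => rw [← (EuclideanSpace.basisFun (Fin n) ℝ).sum_repr y]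
    simp [e]
  calc ∫ y, radialWeight n c s y * fderiv ℝ g (x + r • y) y
      = ∫ y, ∑ i, radialWeight n c s y * (y i * D i (x + r • y)) := by
        congr 1; ext y
        rw [hsum y, Finset.mul_sum]
    _ = ∑ i, ∫ y, radialWeight n c s y * (y i * D i (x + r • y)) := by
        refine integral_finsetSum _ fun i _ => Continuous.integrable_of_hasCompactSupport ?_ ?_
        · exact hwc.mul ((hyi i).mul ((hDc i).comp (by fun_prop)))
        · exact hws.mul_right
    _ = r * ∑ i, ∫ y, radialPotential n c s y * fderiv ℝ (D i) (x + r • y) (e i) := by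
        rw [Finset.mul_sum]; exact Finset.sum_congr rfl fun i _ => hparts i
    _ = r * ∫ y, ∑ i, radialPotential n c s y * fderiv ℝ (D i) (x + r • y) (e i) := by
        rw [integral_finsetSum]
        intro i _
        refine Continuous.integrable_of_hasCompactSupport ?_ ?_
        · exact hVc.mul ((hDd i).comp (by fun_prop))
        · exact hVs.mul_right
    _ = _ := by
        congr 2; ext y
        rw [lapl, Finset.mul_sum]

/-- Weighted mean-value inequality for functions that are subharmonic in the classical sense:
`r ↦ ∫ w(y) g(x + r y) dy` is nondecreasing on `[0, 1]`. -/
lemma mul_integral_radialWeight_le {n : ℕ} {g : EuclideanSpace ℝ (Fin n) → ℝ}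
    (hg : ContDiff ℝ 2 g) (hgs : HasCompactSupport g) (x : EuclideanSpace ℝ (Fin n)) {c s : ℝ}
    (hc : 0 < c) (hs : 0 < s) (hlap : ∀ z ∈ closedBall x s, 0 ≤ lapl g z) :
    g x * ∫ y, radialWeight n c s y ≤ ∫ y, radialWeight n c s y * g (x + y) := by
  have hwc : Continuous (radialWeight n c s) := radialWeight_continuous
  have hws := radialWeight_hasCompactSupport (n := n) hc hs
  have hg1 : Continuous (fderiv ℝ g) := hg.continuous_fderiv (by norm_num)
  have hgc := hg.continuous
  obtain ⟨C, hC⟩ := (hgs.fderiv ℝ).exists_bound_of_continuous hg1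
  have hderiv : ∀ r, HasDerivAt (fun r : ℝ => ∫ y, radialWeight n c s y * g (x + r • y))
      (∫ y, radialWeight n c s y * fderiv ℝ g (x + r • y) y) r := by
    intro r
    refine (hasDerivAt_integral_of_dominated_loc_of_deriv_le (s := univ)
      (F := fun r y => radialWeight n c s y * g (x + r • y))
      (F' := fun r y => radialWeight n c s y * fderiv ℝ g (x + r • y) y)
      (bound := fun y => radialWeight n c s y * (C * ‖y‖)) univ_mem ?_ ?_ ?_ ?_ ?_ ?_).2
    · exact Eventually.of_forall fun r =>
        (hwc.mul (hgc.comp (by fun_prop))).aestronglyMeasurable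
    · exact (hwc.mul (hgc.comp (by fun_prop))).integrable_of_hasCompactSupport hws.mul_right
    · exact (hwc.mul ((hg1.comp (by fun_prop)).clm_apply
        continuous_id)).aestronglyMeasurable
    · refine Eventually.of_forall fun y r _ => ?_
      rw [norm_mul, Real.norm_of_nonneg (radialWeight_nonneg y)]
      gcongr
      · exact radialWeight_nonneg y
      · exact ((fderiv ℝ g (x + r • y)).le_opNorm y).trans (by gcongr; exact hC _)
    · exact (hwc.mul (by fun_prop)).integrable_of_hasCompactSupport hws.mul_right
    · refine Eventually.of_forall fun y r _ => ?_
      have h1 : HasDerivAt (fun r : ℝ => x + r • y) y r := by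
        simpa using ((hasDerivAt_id r).smul_const y).const_add x
      exact (((hg.differentiable (by norm_num)) _).hasFDerivAt.comp_hasDerivAt r h1).const_mul _
  have hmono := monotoneOn_of_deriv_nonneg (convex_Icc (0 : ℝ) 1)
    (fun r _ => (hderiv r).continuousAt.continuousWithinAt)
    (fun r _ => (hderiv r).differentiableAt.differentiableWithinAt) (fun r hr => ?_)
  · have := hmono (left_mem_Icc.2 zero_le_one) (right_mem_Icc.2 zero_le_one) zero_le_one
    simpa [integral_mul_const, mul_comm (g x)] using this
  · rw [interior_Icc] at hr
    rw [(hderiv r).deriv, integral_radialWeight_fderiv hg x hc hs]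
    refine mul_nonneg hr.1.le (integral_nonneg fun y => ?_)
    rcases le_total s ‖y‖ with hy | hy
    · simp [radialPotential_eq_zero hc hs hy]
    · refine mul_nonneg (radialPotential_nonneg hc y) (hlap _ ?_)
      simp only [mem_closedBall, dist_self_add_left, norm_smul, Real.norm_of_nonneg hr.1.le]
      nlinarith [norm_nonneg y, hr.2]

/-- Mean-value inequality with a slightly smaller ball on the left, which absorbs the error made by
replacing the indicator function of the ball by a radial weight. -/
lemma mul_volume_ball_le {n : ℕ} {g : EuclideanSpace ℝ (Fin n) → ℝ}
    (hg : ContDiff ℝ 2 g) (hgs : HasCompactSupport g) (hg0 : ∀ y, 0 ≤ g y)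
    (x : EuclideanSpace ℝ (Fin n)) {s ρ : ℝ} (hρ : 0 < ρ) (hρs : ρ < s)
    (hlap : ∀ z ∈ closedBall x s, 0 ≤ lapl g z) :
    g x * volume.real (ball (0 : EuclideanSpace ℝ (Fin n)) ρ) ≤ ∫ y in ball x s, g y := by
  have hs : 0 < s := hρ.trans hρs
  have hd : 0 < s ^ 2 - ρ ^ 2 := by nlinarith
  -- with this `c` the weight is identically `1` on the ball of radius `ρ`
  obtain ⟨c, hc, hcd⟩ : ∃ c : ℝ, 0 < c ∧ c * (s ^ 2 - ρ ^ 2) = 1 :=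
    ⟨(s ^ 2 - ρ ^ 2)⁻¹, inv_pos.2 hd, inv_mul_cancel₀ hd.ne'⟩
  have hwc : Continuous (radialWeight n c s) := radialWeight_continuous
  have hws := radialWeight_hasCompactSupport (n := n) hc hs
  have hgc := hg.continuous
  have hgi : Integrable g := hgc.integrable_of_hasCompactSupport hgs
  calc g x * volume.real (ball (0 : EuclideanSpace ℝ (Fin n)) ρ)
      ≤ g x * ∫ y, radialWeight n c s y := by
        refine mul_le_mul_of_nonneg_left ?_ (hg0 x)
        rw [← integral_indicator_one measurableSet_ball]
        refine integral_mono ?_ (hwc.integrable_of_hasCompactSupport hws) fun y => ?_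
        · exact (integrable_indicator_iff measurableSet_ball).2
            (integrableOn_const measure_ball_lt_top.ne)
        · by_cases hy : y ∈ ball (0 : EuclideanSpace ℝ (Fin n)) ρ
          · rw [indicator_of_mem hy]
            have hy' : ‖y‖ < ρ := by simpa using hy
            refine (Real.smoothTransition.one_of_one_le ?_).ge
            rw [← hcd]
            gcongr
          · rw [indicator_of_notMem hy]
            exact radialWeight_nonneg y
    _ ≤ ∫ y, radialWeight n c s y * g (x + y) :=
        mul_integral_radialWeight_le hg hgs x hc hs hlap
    _ ≤ ∫ y, (ball x s).indicator g (x + y) := by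
        refine integral_mono
          ((hwc.mul (hgc.comp (by fun_prop))).integrable_of_hasCompactSupport hws.mul_right)
          ((hgi.indicator measurableSet_ball).comp_add_left x) fun y => ?_
        by_cases hy : ‖y‖ < s
        · rw [indicator_of_mem (by simpa using hy)]
          exact mul_le_of_le_one_left (hg0 _) (radialWeight_le_one y)
        · rw [indicator_of_notMem (by simpa using hy)]
          simp [radialWeight_eq_zero hc hs (not_lt.1 hy)]
    _ = ∫ y in ball x s, g y := by
        rw [integral_add_left_eq_self (fun y => (ball x s).indicator g y) x,
          integral_indicator measurableSet_ball]

/-! ### Smooth subharmonic approximation of `h` -/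

lemma lapl_congr {n : ℕ} {f g : EuclideanSpace ℝ (Fin n) → ℝ} {x : EuclideanSpace ℝ (Fin n)}
    (hfg : f =ᶠ[𝓝 x] g) : lapl f x = lapl g x := by
  refine Finset.sum_congr rfl fun i _ => ?_
  have h1 : (fun y => fderiv ℝ f y (EuclideanSpace.single i (1 : ℝ))) =ᶠ[𝓝 x]
      fun y => fderiv ℝ g y (EuclideanSpace.single i (1 : ℝ)) :=
    (hfg.fderiv (𝕜 := ℝ)).mono fun y hy => by simp only [hy]
  rw [h1.fderiv_eq]

/-- `Δ(ψ ∘ h) = ψ''(h) |∇h|² + ψ'(h) Δh`, which is nonnegative when `h` is harmonic and `ψ` is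
convex. -/
lemma lapl_comp_nonneg {n : ℕ} {h : EuclideanSpace ℝ (Fin n) → ℝ} {x : EuclideanSpace ℝ (Fin n)}
    (hh : ContDiffAt ℝ 2 h x) (hlap : lapl h x = 0) {ψ ψ' : ℝ → ℝ} {a : ℝ}
    (hψ : ∀ t, HasDerivAt ψ (ψ' t) t) (hψ' : HasDerivAt ψ' a (h x)) (ha : 0 ≤ a) :
    0 ≤ lapl (fun y => ψ (h y)) x := by
  have hterm : ∀ v, fderiv ℝ (fun y => fderiv ℝ (fun y => ψ (h y)) y v) x v =
      a * (fderiv ℝ h x v) ^ 2 + ψ' (h x) * fderiv ℝ (fun y => fderiv ℝ h y v) x v := by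
    intro v
    have hev : (fun y => fderiv ℝ (fun y => ψ (h y)) y v) =ᶠ[𝓝 x]
        fun y => ψ' (h y) * fderiv ℝ h y v := by
      filter_upwards [hh.eventually (by simp)] with y hy
      have hd : HasFDerivAt (fun y => ψ (h y)) (ψ' (h y) • fderiv ℝ h y) y :=
        (hψ (h y)).comp_hasFDerivAt y (hy.differentiableAt (by norm_num)).hasFDerivAt
      rw [hd.fderiv]; rfl
    have h1 : HasFDerivAt (fun y => ψ' (h y)) (a • fderiv ℝ h x) x :=
      hψ'.comp_hasFDerivAt x (hh.differentiableAt (by norm_num)).hasFDerivAt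
    have h2 : DifferentiableAt ℝ (fun y => fderiv ℝ h y v) x :=
      ((hh.fderiv_right (m := 1) (by norm_num)).differentiableAt (by norm_num)).clm_apply
        (differentiableAt_const v)
    rw [hev.fderiv_eq, (h1.fun_mul h2.hasFDerivAt).fderiv]
    simp
    ring
  have hnn : lapl (fun y => ψ (h y)) x = (∑ i : Fin n,
      a * (fderiv ℝ h x (EuclideanSpace.single i (1 : ℝ))) ^ 2) + ψ' (h x) * lapl h x := by
    rw [lapl, lapl, Finset.mul_sum, ← Finset.sum_add_distrib]
    exact Finset.sum_congr rfl fun i _ => hterm _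
  rw [hnn, hlap, mul_zero, add_zero]
  exact Finset.sum_nonneg fun i _ => mul_nonneg ha (sq_nonneg _)

/-- The mean-value inequality with errors `ε` in the height and `s - ρ` in the radius, obtained from
a `C²` subharmonic approximation of `h` from below. -/
lemma approx_mean_value {n : ℕ} {U : Set (EuclideanSpace ℝ (Fin n))}
    {h : EuclideanSpace ℝ (Fin n) → ℝ} (hU : IsOpen U) (hcont : ContinuousOn h U)
    (hnonneg : ∀ x ∈ U, 0 ≤ h x) (hharm : IsHarmonicOn h {x ∈ U | 0 < h x})
    {x : EuclideanSpace ℝ (Fin n)} {s ρ ε : ℝ} (hρ : 0 < ρ) (hρs : ρ < s)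
    (hsub : closedBall x s ⊆ U) (hε : 0 < ε) :
    (h x - 2 * ε) * volume.real (ball (0 : EuclideanSpace ℝ (Fin n)) ρ) ≤
      ∫ y in ball x s, h y := by
  have hs : 0 < s := hρ.trans hρs
  let ψ : ℝ → ℝ := fun t => ε * smoothPosPart (t / ε - 1)
  have hψ : ∀ t, HasDerivAt ψ (Real.smoothTransition (t / ε - 1)) t := by
    intro t
    have h1 : HasDerivAt (fun t : ℝ => t / ε - 1) (1 / ε) t :=
      ((hasDerivAt_id t).div_const ε).sub_const 1
    refine (((smoothPosPart_hasDerivAt _).comp t h1).const_mul ε).congr_deriv ?_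
    field_simp
  have hψ' : ∀ t, HasDerivAt (fun t => Real.smoothTransition (t / ε - 1))
      (deriv Real.smoothTransition (t / ε - 1) * (1 / ε)) t := by
    intro t
    have h1 : HasDerivAt (fun t : ℝ => t / ε - 1) (1 / ε) t :=
      ((hasDerivAt_id t).div_const ε).sub_const 1
    exact ((Real.smoothTransition.contDiff (n := 1)).differentiable
      (by norm_num) _).hasDerivAt.comp t h1
  have hψ'' : ∀ t, 0 ≤ deriv Real.smoothTransition (t / ε - 1) * (1 / ε) := fun t =>
    mul_nonneg Real.smoothTransition.monotone.deriv_nonneg (by positivity)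
  have hψc : ContDiff ℝ 2 ψ := contDiff_const.mul (smoothPosPart_contDiff.comp
    ((contDiff_id.div_const ε).sub contDiff_const))
  have hψ0 : ∀ t, 0 ≤ ψ t := fun t => mul_nonneg hε.le (smoothPosPart_nonneg _)
  have hψz : ∀ t, t ≤ ε → ψ t = 0 := fun t ht => by
    have : t / ε - 1 ≤ 0 := by rw [sub_nonpos, div_le_one hε]; exact ht
    simp [ψ, smoothPosPart_of_nonpos this]
  have hψle : ∀ t, 0 ≤ t → ψ t ≤ t := fun t ht => by
    rcases le_total t ε with h1 | h1
    · rw [hψz t h1]; exact ht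
    · have h2 : 0 ≤ t / ε - 1 := by rw [sub_nonneg, one_le_div hε]; exact h1
      calc ψ t ≤ ε * (t / ε - 1) := mul_le_mul_of_nonneg_left (smoothPosPart_le h2) hε.le
        _ = t - ε := by field_simp
        _ ≤ t := by linarith
  have hψge : ∀ t, t - 2 * ε ≤ ψ t := fun t => by
    calc t - 2 * ε = ε * (t / ε - 1 - 1) := by field_simp; ring
      _ ≤ ψ t := mul_le_mul_of_nonneg_left (sub_one_le_smoothPosPart _) hε.le
  -- Where `h` is small, `ψ ∘ h` vanishes identically, so the free boundary causes no trouble.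
  have hPopen : IsOpen {x ∈ U | 0 < h x} := hcont.isOpen_inter_preimage hU isOpen_Ioi
  have hzero : ∀ y ∈ U, ¬ 0 < h y → (fun y => ψ (h y)) =ᶠ[𝓝 y] fun _ => 0 := by
    intro y hy h0
    have : ∀ᶠ z in 𝓝 y, h z < ε :=
      (hcont.continuousAt (hU.mem_nhds hy)).eventually_lt_const ((not_lt.1 h0).trans_lt hε)
    exact this.mono fun z hz => hψz _ hz.le
  have hreg : ∀ y ∈ U, ContDiffAt ℝ 2 (fun y => ψ (h y)) y ∧ 0 ≤ lapl (fun y => ψ (h y)) y := by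
    intro y hy
    by_cases h0 : 0 < h y
    · have hyP : y ∈ {x ∈ U | 0 < h x} := ⟨hy, h0⟩
      have hhy : ContDiffAt ℝ 2 h y := hharm.1.contDiffAt (hPopen.mem_nhds hyP)
      exact ⟨hψc.contDiffAt.comp y hhy,
        lapl_comp_nonneg hhy (hharm.2 y hyP) hψ (hψ' _) (hψ'' _)⟩
    · refine ⟨contDiffAt_const.congr_of_eventuallyEq (hzero y hy h0), ?_⟩
      rw [lapl_congr (hzero y hy h0)]
      simp [lapl]
  -- Cut `ψ ∘ h` off outside a neighbourhood of the closed ball.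
  obtain ⟨δ, hδ, hδU⟩ := (isCompact_closedBall x s).exists_cthickening_subset_open hU hsub
  rw [cthickening_closedBall hδ.le hs.le] at hδU
  let χ : ContDiffBump x := ⟨s + δ / 2, s + δ, by positivity, by linarith⟩
  have hχU : tsupport χ ⊆ U := by
    rw [χ.tsupport_eq]
    refine (closedBall_subset_closedBall ?_).trans hδU
    simp only [χ]; linarith
  let g : EuclideanSpace ℝ (Fin n) → ℝ := fun y => χ y * ψ (h y)
  have hgc : ContDiff ℝ 2 g := by
    refine contDiff_iff_contDiffAt.2 fun y => ?_
    by_cases hy : y ∈ tsupport χ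
    · exact χ.contDiffAt.mul (hreg y (hχU hy)).1
    · refine (contDiffAt_const (c := (0 : ℝ))).congr_of_eventuallyEq ?_
      filter_upwards [notMem_tsupport_iff_eventuallyEq.1 hy] with z hz
      simp [g, hz]
  have hg1 : ∀ y ∈ closedBall x s, g =ᶠ[𝓝 y] fun y => ψ (h y) := by
    intro y hy
    have : y ∈ ball x χ.rIn := closedBall_subset_ball (by simp only [χ]; linarith) hy
    filter_upwards [χ.eventuallyEq_one_of_mem_ball this] with z hz
    simp [g, hz]
  have hgs : HasCompactSupport g := χ.hasCompactSupport.mul_right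
  have hg0 : ∀ y, 0 ≤ g y := fun y => mul_nonneg χ.nonneg (hψ0 _)
  have hmv := mul_volume_ball_le hgc hgs hg0 x hρ hρs fun z hz => by
    rw [lapl_congr (hg1 z hz)]; exact (hreg z (hsub hz)).2
  refine (mul_le_mul_of_nonneg_right ?_ measureReal_nonneg).trans (hmv.trans ?_)
  · rw [(hg1 x (mem_closedBall_self hs.le)).eq_of_nhds]
    exact hψge _
  · refine setIntegral_mono_on ?_ ?_ measurableSet_ball fun y hy => ?_
    · exact (hgc.continuous.integrable_of_hasCompactSupport hgs).integrableOn
    · exact ((hcont.mono hsub).integrableOn_compact (isCompact_closedBall x s)).mono_set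
        ball_subset_closedBall
    · have hy' := ball_subset_closedBall hy
      rw [(hg1 y hy').eq_of_nhds]
      exact hψle _ (hnonneg y (hsub hy'))

theorem stmt6 (n : ℕ) (U : Set (EuclideanSpace ℝ (Fin n)))
    (h : EuclideanSpace ℝ (Fin n) → ℝ)
    (hU : IsOpen U)
    (hcont : ContinuousOn h U)
    (hnonneg : ∀ x ∈ U, 0 ≤ h x)
    (hharm : IsHarmonicOn h {x ∈ U | 0 < h x}) :
    ∀ x ∈ U, ∀ s : ℝ, 0 < s → closedBall x s ⊆ U →
      h x ≤ ⨍ y in ball x s, h y := by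
  intro x _ s hs hsub
  set V : ℝ := volume.real (ball (0 : EuclideanSpace ℝ (Fin n)) 1) with hV
  have hvol : ∀ (z : EuclideanSpace ℝ (Fin n)) {ρ : ℝ}, 0 < ρ →
      volume.real (ball z ρ) = ρ ^ n * V := by
    intro z ρ hρ
    rw [hV, measureReal_def, Measure.addHaar_ball_of_pos _ _ hρ, ENNReal.toReal_mul,
      ENNReal.toReal_ofReal (by positivity), finrank_euclideanSpace_fin, measureReal_def]
  have hVpos : 0 < V :=
    ENNReal.toReal_pos (measure_ball_pos _ _ one_pos).ne' measure_ball_lt_top.ne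
  -- Let the two error parameters `ε = t` and `s - ρ = t` of `approx_mean_value` tend to zero.
  have hlim : Tendsto (fun t : ℝ => (h x - 2 * t) * ((s - t) ^ n * V)) (𝓝[>] 0)
      (𝓝 (h x * (s ^ n * V))) := by
    have : Continuous fun t : ℝ => (h x - 2 * t) * ((s - t) ^ n * V) := by fun_prop
    simpa using (this.tendsto 0).mono_left nhdsWithin_le_nhds
  have hle : h x * (s ^ n * V) ≤ ∫ y in ball x s, h y := by
    refine le_of_tendsto hlim ?_
    filter_upwards [Ioo_mem_nhdsGT hs] with t ht
    rw [← hvol 0 (sub_pos.2 ht.2)]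
    exact approx_mean_value hU hcont hnonneg hharm (sub_pos.2 ht.2) (by linarith [ht.1]) hsub ht.1
  rw [setAverage_eq, hvol x hs, smul_eq_mul, ← div_eq_inv_mul, le_div_iff₀ (by positivity)]
  exact hle
end

section
/- Let U ⊆ ℝⁿ be open and let w : U → ℝ be continuous and superharmonic in the mean-value sense: for every x ∈ U and s > 0 with cl(B_s(x)) ⊆ U, w(x) ≥ (average of w over B_s(x)). For ρ > 0 define Φ(x) = inf{w(y) : |y − x| ≤ ρ} on the open set U_ρ = {x : cl(B_ρ(x)) ⊆ U, x in the interior of that set}. Then Φ is continuous and superharmonic in the mean-value sense on U_ρ. -/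
open Metric Set MeasureTheory

/-!
Write `Φ x = min {w (x + e) : ‖e‖ ≤ ρ}`. If the minimum at `x` is attained at `x + e`, then
`Φ y ≤ w (y + e)` for all `y` in the ball `B_s(x)`, with equality at `y = x`. Averaging over
`B_s(x)`, translating by `e` and using the mean-value inequality for `w` at `x + e` gives
`⨍ Φ ≤ ⨍ w (· + e) ≤ w (x + e) = Φ x`. Integrability of both sides comes from continuity on the
compact closed ball. Continuity of `Φ` is proved in `continuousOn_infBall`: the upper bound is the
same touching argument, the lower bound is compactness of `closedBall x ρ`.
-/

/-- The infimum over the closed ball is attained, written through a translation vector. -/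
lemma exists_translate_eq_sInf {n : ℕ} {U : Set (EuclideanSpace ℝ (Fin n))}
    {w : EuclideanSpace ℝ (Fin n) → ℝ} {ρ : ℝ} (hρ : 0 < ρ) (hcont : ContinuousOn w U)
    {x : EuclideanSpace ℝ (Fin n)} (hx : closedBall x ρ ⊆ U) :
    ∃ e : EuclideanSpace ℝ (Fin n), ‖e‖ ≤ ρ ∧ sInf (w '' closedBall x ρ) = w (x + e) := by
  obtain ⟨y, hy, h, -⟩ := (isCompact_closedBall x ρ).exists_sInf_image_eq_and_le
    (nonempty_closedBall.2 hρ.le) (hcont.mono hx)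
  refine ⟨y - x, by simpa [dist_eq_norm] using hy, by simpa using h⟩

lemma sInf_le_translate {n : ℕ} {U : Set (EuclideanSpace ℝ (Fin n))}
    {w : EuclideanSpace ℝ (Fin n) → ℝ} {ρ : ℝ} (hcont : ContinuousOn w U)
    {x e : EuclideanSpace ℝ (Fin n)} (hx : closedBall x ρ ⊆ U) (he : ‖e‖ ≤ ρ) :
    sInf (w '' closedBall x ρ) ≤ w (x + e) :=
  csInf_le ((isCompact_closedBall x ρ).bddBelow_image (hcont.mono hx))
    (mem_image_of_mem w (by simpa [dist_eq_norm] using he))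

lemma continuousOn_infBall {n : ℕ} {U : Set (EuclideanSpace ℝ (Fin n))}
    {w : EuclideanSpace ℝ (Fin n) → ℝ} {ρ : ℝ} (hU : IsOpen U) (hρ : 0 < ρ)
    (hcont : ContinuousOn w U) :
    ContinuousOn (fun x => sInf (w '' closedBall x ρ)) {x | closedBall x ρ ⊆ U} := by
  intro x hx
  obtain ⟨e, he, hxe⟩ := exists_translate_eq_sInf hρ hcont hx
  refine tendsto_order.2 ⟨fun a ha => ?_, fun a ha => ?_⟩
  · -- `w > a` on a whole `δ`-neighbourhood of the compact ball, hence on all nearby balls.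
    have hV : IsOpen (U ∩ w ⁻¹' Ioi a) := hcont.isOpen_inter_preimage hU isOpen_Ioi
    obtain ⟨δ, hδ, hsub⟩ := (isCompact_closedBall x ρ).exists_thickening_subset_open hV
      (fun y hy => ⟨hx hy, ha.trans_le
        (csInf_le ((isCompact_closedBall x ρ).bddBelow_image (hcont.mono hx))
          (mem_image_of_mem w hy))⟩)
    filter_upwards [self_mem_nhdsWithin, mem_nhdsWithin_of_mem_nhds (ball_mem_nhds x hδ)]
      with z hz hzx
    obtain ⟨f, hf, hzf⟩ := exists_translate_eq_sInf hρ hcont hz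
    rw [hzf]
    exact (hsub (mem_thickening_iff.2 ⟨x + f, by simpa [dist_eq_norm] using hf,
      by simpa using hzx⟩)).2
  · have hUe : x + e ∈ U := hx (by simpa [dist_eq_norm] using he)
    have h1 : ContinuousAt (fun z => w (z + e)) x :=
      ContinuousAt.comp (f := fun z => z + e) (hcont.continuousAt (hU.mem_nhds hUe))
        (by fun_prop)
    have h2 : w (x + e) < a := hxe ▸ ha
    filter_upwards [self_mem_nhdsWithin,
      mem_nhdsWithin_of_mem_nhds (h1.eventually_lt_const h2)] with z hz hza
    exact (sInf_le_translate hcont hz he).trans_lt hza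

theorem stmt7 (n : ℕ) (U : Set (EuclideanSpace ℝ (Fin n)))
    (w : EuclideanSpace ℝ (Fin n) → ℝ) (ρ : ℝ)
    (hU : IsOpen U) (hρ : 0 < ρ)
    (hcont : ContinuousOn w U)
    (hsuper : ∀ x ∈ U, ∀ s : ℝ, 0 < s → closedBall x s ⊆ U →
      (⨍ y in ball x s, w y) ≤ w x) :
    ContinuousOn (fun x => sInf (w '' closedBall x ρ))
      (interior {x | closedBall x ρ ⊆ U}) ∧
    ∀ x ∈ interior {x | closedBall x ρ ⊆ U}, ∀ s : ℝ, 0 < s →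
      closedBall x s ⊆ interior {x | closedBall x ρ ⊆ U} →
      (⨍ y in ball x s, sInf (w '' closedBall y ρ)) ≤ sInf (w '' closedBall x ρ) := by
  have hΦ := continuousOn_infBall hU hρ hcont
  refine ⟨hΦ.mono interior_subset, fun x hx s hs hxs => ?_⟩
  replace hxs := hxs.trans interior_subset
  obtain ⟨e, he, hxe⟩ := exists_translate_eq_sInf hρ hcont (interior_subset hx)
  have hmaps : ∀ y ∈ closedBall x s, y + e ∈ U := fun y hy =>
    hxs hy (by simpa [dist_eq_norm] using he)
  have hball : closedBall (x + e) s ⊆ U := fun z hz => by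
    have := hmaps (z - e) (by
      rw [mem_closedBall, dist_eq_norm] at hz ⊢
      rwa [sub_sub, add_comm e x])
    simpa using this
  have hintΦ : IntegrableOn (fun y => sInf (w '' closedBall y ρ)) (ball x s) :=
    ((hΦ.mono hxs).integrableOn_compact (isCompact_closedBall x s)).mono_set
      ball_subset_closedBall
  have hintw : IntegrableOn (fun y => w (y + e)) (ball x s) :=
    ((hcont.comp (f := fun y => y + e) (by fun_prop) hmaps).integrableOn_compact
      (isCompact_closedBall x s)).mono_set ball_subset_closedBall
  have hle : ∫ y in ball x s, sInf (w '' closedBall y ρ) ≤ ∫ y in ball x s, w (y + e) :=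
    setIntegral_mono_on hintΦ hintw measurableSet_ball fun y hy =>
      sInf_le_translate hcont (hxs (ball_subset_closedBall hy)) he
  have hpre : (fun y => y + e) ⁻¹' ball (x + e) s = ball x s := by
    ext y; simp
  have htrans : ∫ y in ball x s, w (y + e) = ∫ y in ball (x + e) s, w y := by
    rw [← hpre]
    exact (measurePreserving_add_right volume e).setIntegral_preimage_emb
      (measurableEmbedding_addRight e) w _
  have hvol : volume.real (ball x s) = volume.real (ball (x + e) s) := by
    simp only [measureReal_def, Measure.addHaar_ball_center]
  have key := hsuper (x + e) (hball (mem_closedBall_self hs.le)) s hs hball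
  rw [hxe]
  refine le_trans ?_ key
  rw [setAverage_eq, setAverage_eq, ← hvol, ← htrans, smul_eq_mul, smul_eq_mul]
  exact mul_le_mul_of_nonneg_left hle (inv_nonneg.2 measureReal_nonneg)
end
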